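/- arXiv:1505.03161 — 3 statements merged into one kernel-verified Lean document; each statement's English description precedes it below -/
import Mathlib

section
/- The 1-skeleton resistance scaling factor ρ^T, defined by log ρ^T = lim_{n→∞} (1/n) log R_n^T, satisfies 2/3 ≤ ρ^T ≤ 4/5. -/
/-!
Why the bounds hold. Write `C_n = 1 / R_n^T` for the effective conductance between the two opposite
sides. In skew coordinates of the plane the triangles of `T_{n+1}` form the list `TL n`, whose
vertices are rational and ordered by type, and the energy of the graph is comparable, up to absolute
constants, with `hexE n f`, the sum over all triangles of the squared increments of `f` along their
three edges (`energy_bounds`). The comparison needs that each edge lies in at most two triangles,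
which follows from the fact that the triangles of `TL n` meet in common faces (`good_TL`).

* Lower bound for `C_n`. Minimizing over the values at the four new vertices, one barycentric
  subdivision multiplies the energy of a triangle by at least `5/4` (`triE_le_subE_one`). Hence
  `C_n ≥ c (5/4)^n`.
* Upper bound for `C_n`. Barycentric subdivision multiplies the energy of an affine function on a
  triangle by exactly `4/3`; this is applied to the affine function `linU`, which is `0` and `1` on
  the two sides (`subE_linU`). Hence `C_n ≤ C (4/3)^n`.
* Existence of the limit. A potential `h` on the hexagon yields, by reflections, cut-offs and
  rotations, a partition of unity `pou h` subordinate to the even corners of the hexagon with energy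
  at most `160` times that of `h` (`hexE_pou`). The map `hexMap` folds the first subdivision of a
  triangle out to the hexagon, so `pou h ∘ hexMap` is a partition of unity on each triangle
  subordinate to its vertices. Interpolating with it the values of a potential `g` at the vertices
  of the `m`-th subdivision gives a potential on level `m + n` with energy at most a constant times
  the product of the energies of `g` and `h` (`hexE_interp_le`). Therefore
  `C_{m+n} ≤ K C_m C_n` (`cond_submul`), and Fekete's lemma gives the limit of `log C_n / n`.

The limit lies between `log (5/4)` and `log (4/3)`, which yields `3/4 ≤ ρ^T ≤ 4/5`, slightly more
than claimed.
-/

/-!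
Setup for the barycentric subdivision / hexacarpet resistance problem
(Begué, Kelleher, Nelson, Panzo, Pellico, Teplyaev, "Resistance scaling
and the number of spanning trees ..." / Barlow–Bass type estimates).

We realize the repeated barycentric subdivision of a triangle via its
hexagonal planar embedding: for `n ≥ 1` the complex `T_n` is embedded
in the plane with the seven vertices of `T_1` sent to the corners and
the center of a regular hexagon, and deeper subdivisions computed by
taking barycenters.  The `n`-th level triangles are recorded as ordered
triples of points of the plane.
-/

noncomputable section

namespace BarycentricHexacarpet

attribute [local instance] Classical.propDecidable

/-- Points of the plane. -/
abbrev Pt : Type := ℝ × ℝ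

/-- Barycenter of three points. -/
def bary (a b c : Pt) : Pt := (3:ℝ)⁻¹ • (a + b + c)

/-- Midpoint (barycenter of an edge). -/
def mpt (a b : Pt) : Pt := (2:ℝ)⁻¹ • (a + b)

/-- The six triangles of the barycentric subdivision of the triangle `(a,b,c)`,
each recorded as (vertex, barycenter of an edge containing it, barycenter). -/
def children : Pt × Pt × Pt → Set (Pt × Pt × Pt) := fun t =>
  {(t.1, mpt t.1 t.2.1, bary t.1 t.2.1 t.2.2), (t.2.1, mpt t.1 t.2.1, bary t.1 t.2.1 t.2.2),
   (t.2.1, mpt t.2.1 t.2.2, bary t.1 t.2.1 t.2.2), (t.2.2, mpt t.2.1 t.2.2, bary t.1 t.2.1 t.2.2),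
   (t.1, mpt t.1 t.2.2, bary t.1 t.2.1 t.2.2), (t.2.2, mpt t.1 t.2.2, bary t.1 t.2.1 t.2.2)}

/-- The corners of the regular hexagon: `p_0, p_0', p_1, p_1', p_2, p_2'`
are the corners with indices `0, 1, 2, 3, 4, 5`. -/
def hexCorner (i : ℕ) : Pt := (Real.cos (i * (Real.pi / 3)), Real.sin (i * (Real.pi / 3)))

/-- The set of (ordered) triangles of the `n`-th barycentric subdivision `T_n`
of the triangle, in the hexagonal embedding (defined for `n ≥ 1`):  the six
triangles of `T_1` are the six sectors of the regular hexagon, and each further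
subdivision is barycentric. -/
def TriSet : ℕ → Set (Pt × Pt × Pt)
  | 0 => ∅
  | 1 => {t | ∃ i : Fin 6, t = (hexCorner i, hexCorner (i + 1), ((0:ℝ), (0:ℝ)))}
  | (n + 2) => ⋃ t ∈ TriSet (n + 1), children t

/-- `E_n^2`: the 2-simplexes (triangles) of `T_n`, as 3-element vertex sets. -/
def Simp2 (n : ℕ) : Set (Set Pt) :=
  {s | ∃ t ∈ TriSet n, s = {t.1, t.2.1, t.2.2}}

/-- `E_n^1`: the 1-simplexes (edges) of `T_n`, as 2-element vertex sets. -/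
def Simp1 (n : ℕ) : Set (Set Pt) :=
  {s | ∃ t ∈ TriSet n, s = {t.1, t.2.1} ∨ s = {t.2.1, t.2.2} ∨ s = {t.1, t.2.2}}

/-- `E_n^0`: the 0-simplexes (vertices) of `T_n`. -/
def Simp0 (n : ℕ) : Set Pt :=
  {p | ∃ t ∈ TriSet n, p = t.1 ∨ p = t.2.1 ∨ p = t.2.2}

/-- Conductances of the 1-skeleton graph `G_n^T`:  vertices `p ≠ q` are adjacent
iff `{p,q}` is an edge of `T_n`; the conductance is `2` if the edge is contained
in exactly one triangle of `T_n`, and `1` if it is contained in two triangles. -/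
def cT (n : ℕ) (p q : Pt) : ℝ :=
  if p ≠ q ∧ ({p, q} : Set Pt) ∈ Simp1 n then
    (if {f ∈ Simp2 n | p ∈ f ∧ q ∈ f}.ncard = 1 then 2 else 1)
  else 0

/-- Conductances of the (modified) hexacarpet graph `G_n^H`:  its vertex set is
`E_n^2 ∪ E_n^1`, an edge `e ∈ E_n^1` is adjacent to a triangle `f ∈ E_n^2` iff
`e` is a face of `f`, and every edge of the graph has conductance `1/2`. -/
def cH (n : ℕ) (u v : Set Pt) : ℝ :=
  if (u ∈ Simp1 n ∧ v ∈ Simp2 n ∧ u ⊆ v) ∨ (v ∈ Simp1 n ∧ u ∈ Simp2 n ∧ v ⊆ u)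
  then 1 / 2 else 0

/-- The energy of a potential `f` on a weighted graph with conductances `c`:
`E(f) = (1/2) ∑ c p q * (f p - f q)^2`. -/
def energy {V : Type} (c : V → V → ℝ) (f : V → ℝ) : ℝ :=
  (1 / 2) * ∑' p : V, ∑' q : V, c p q * (f p - f q) ^ 2

/-- The effective resistance between `A` and `B`:
`R(A,B) = (inf {E(f) : f ≡ 0 on A, f ≡ 1 on B})⁻¹`. -/
def effRes {V : Type} (c : V → V → ℝ) (A B : Set V) : ℝ :=
  (sInf {e : ℝ | ∃ f : V → ℝ, (∀ p ∈ A, f p = 0) ∧ (∀ p ∈ B, f p = 1) ∧ e = energy c f})⁻¹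

/-- The `i`-th closed side of the hexagon. -/
def hexSide (i : ℕ) : Set Pt := segment ℝ (hexCorner i) (hexCorner (i + 1))

/-- `L_i^{(n,T)}`: the vertices of `G_n^T` whose geometric realization lies in
the `i`-th closed side of the hexagon. -/
def LsetT (n i : ℕ) : Set Pt := {p ∈ Simp0 n | p ∈ hexSide i}

/-- `L_i^{(n,H)}`: the vertices of `G_n^H` whose geometric realization lies in
the `i`-th closed side of the hexagon. -/
def LsetH (n i : ℕ) : Set (Set Pt) :=
  {v ∈ Simp2 n ∪ Simp1 n | convexHull ℝ v ⊆ hexSide i}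

/-- `R_n^T`: the effective resistance in `G_n^T` between
`A_{(n)}^T = L_2^{(n,T)}` and `B_{(n)}^T = L_5^{(n,T)}`. -/
def RT (n : ℕ) : ℝ := effRes (cT n) (LsetT n 2) (LsetT n 5)

/-- `R_n`: the effective resistance in `G_n^H` between
`A_{(n)}^H = L_0^{(n,H)} ∪ L_1^{(n,H)}` and `B_{(n)}^H = L_3^{(n,H)} ∪ L_4^{(n,H)}`. -/
def RH (n : ℕ) : ℝ :=
  effRes (cH n) (LsetH n 0 ∪ LsetH n 1) (LsetH n 3 ∪ LsetH n 4)

end BarycentricHexacarpet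

namespace BarycentricHexacarpet

/-! ### Triangles in skew coordinates and their energies -/

/-- A triangle, recorded as an ordered triple of points. -/
abbrev Tri : Type := Pt × Pt × Pt

/-- The point of the plane with barycentric coordinates `(y.1, y.2, 1 - y.1 - y.2)` with respect
to the triangle `t`. -/
def aff (t : Tri) (y : Pt) : Pt := y.1 • t.1 + y.2 • t.2.1 + (1 - y.1 - y.2) • t.2.2

/-- The vertexwise image of a triangle under a map of the plane. -/
def mapT (A : Pt → Pt) (t : Tri) : Tri := (A t.1, A t.2.1, A t.2.2)

/-- Maps that commute with the barycenters of two and of three points; all affine maps do. -/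
def IsAff (A : Pt → Pt) : Prop :=
  (∀ a b, A (mpt a b) = mpt (A a) (A b)) ∧ ∀ a b c, A (bary a b c) = bary (A a) (A b) (A c)

/-- The list of the six children of a triangle. -/
def childL (t : Tri) : List Tri :=
  [(t.1, mpt t.1 t.2.1, bary t.1 t.2.1 t.2.2), (t.2.1, mpt t.1 t.2.1, bary t.1 t.2.1 t.2.2),
   (t.2.1, mpt t.2.1 t.2.2, bary t.1 t.2.1 t.2.2), (t.2.2, mpt t.2.1 t.2.2, bary t.1 t.2.1 t.2.2),
   (t.1, mpt t.1 t.2.2, bary t.1 t.2.1 t.2.2), (t.2.2, mpt t.1 t.2.2, bary t.1 t.2.1 t.2.2)]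

lemma mem_childL (t c : Tri) : c ∈ childL t ↔ c ∈ children t := by
  simp [childL, children]

/-- The triangles of `T_{n+1}` in skew coordinates, in which the corners of the hexagon are
`(1,0), (1,1), (0,1), (-1,0), (-1,-1), (0,-1)`. The vertices of each triangle are listed by type:
the vertices of `T_n` come first, then the midpoints of edges of `T_n`, then the barycenters of
triangles of `T_n`. Here the even corners of the hexagon are the vertices of `T_0`. -/
def TL : ℕ → List Tri
  | 0 => [((1, 0), (1, 1), (0, 0)), ((0, 1), (1, 1), (0, 0)), ((0, 1), (-1, 0), (0, 0)),
          ((-1, -1), (-1, 0), (0, 0)), ((-1, -1), (0, -1), (0, 0)), ((1, 0), (0, -1), (0, 0))]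
  | n + 1 => (TL n).flatMap childL

/-- The energy of `f` on the three edges of `t`, all of conductance one. -/
def triE (f : Pt → ℝ) (t : Tri) : ℝ :=
  (f t.1 - f t.2.1) ^ 2 + (f t.2.1 - f t.2.2) ^ 2 + (f t.1 - f t.2.2) ^ 2

/-- The sum of the triangle energies of `f` over the `n`-th barycentric subdivision of `t`. -/
def subE : ℕ → (Pt → ℝ) → Tri → ℝ
  | 0, f, t => triE f t
  | n + 1, f, t => ((childL t).map (subE n f)).sum

/-- The sum of the triangle energies of `f` over all triangles of `TL n`. Interior edges are counted
twice, boundary edges once. -/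
def hexE (n : ℕ) (f : Pt → ℝ) : ℝ := ((TL n).map (triE f)).sum

/-- Subdividing `m` times and then `k` times is the same as subdividing `m + k` times. -/
lemma sum_subE (m k : ℕ) (f : Pt → ℝ) : ((TL m).map (subE k f)).sum = hexE (m + k) f := by
  induction k generalizing m with
  | zero => rfl
  | succ k ih =>
    rw [show m + (k + 1) = (m + 1) + k by ring, ← ih, TL, List.map_flatMap, List.flatMap_def,
      List.sum_flatten, List.map_map]
    rfl

lemma hexE_eq (n : ℕ) (f : Pt → ℝ) : hexE n f = ((TL 0).map (subE n f)).sum := by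
  rw [sum_subE, zero_add]

lemma subE_succ (n : ℕ) (f : Pt → ℝ) (t : Tri) :
    subE (n + 1) f t = ((childL t).map (subE n f)).sum := rfl

lemma isAff_aff (t : Tri) : IsAff (aff t) := by
  constructor
  · intro a b; ext <;> simp [aff, mpt] <;> ring
  · intro a b c; ext <;> simp [aff, bary] <;> ring

lemma childL_mapT {A : Pt → Pt} (hA : IsAff A) (t : Tri) :
    childL (mapT A t) = (childL t).map (mapT A) := by
  simp [childL, mapT, hA.1, hA.2]

lemma subE_mapT {A : Pt → Pt} (hA : IsAff A) (n : ℕ) (f : Pt → ℝ) (t : Tri) :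
    subE n f (mapT A t) = subE n (f ∘ A) t := by
  induction n generalizing t with
  | zero => rfl
  | succ n ih =>
    rw [subE_succ, subE_succ, childL_mapT hA, List.map_map]
    congr 1
    exact List.map_congr_left fun c _ => ih c

/-- All vertices of `t` lie in `K`. -/
def TriIn (K : Set Pt) (t : Tri) : Prop := t.1 ∈ K ∧ t.2.1 ∈ K ∧ t.2.2 ∈ K

lemma mpt_mem {K : Set Pt} (hK : Convex ℝ K) {a b : Pt} (ha : a ∈ K) (hb : b ∈ K) :
    mpt a b ∈ K := by
  have := hK ha hb (by norm_num : (0:ℝ) ≤ 2⁻¹) (by norm_num : (0:ℝ) ≤ 2⁻¹) (by norm_num)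
  rwa [← smul_add] at this

lemma bary_mem {K : Set Pt} (hK : Convex ℝ K) {a b c : Pt} (ha : a ∈ K) (hb : b ∈ K)
    (hc : c ∈ K) : bary a b c ∈ K := by
  have := hK (mpt_mem hK ha hb) hc (by norm_num : (0:ℝ) ≤ 2/3) (by norm_num : (0:ℝ) ≤ 1/3)
    (by norm_num)
  convert this using 1
  ext <;> simp [bary, mpt] <;> ring

lemma triIn_child {K : Set Pt} (hK : Convex ℝ K) {t c : Tri} (ht : TriIn K t)
    (hc : c ∈ childL t) : TriIn K c := by
  obtain ⟨h0, h1, h2⟩ := ht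
  have hb := bary_mem hK h0 h1 h2
  have h01 := mpt_mem hK h0 h1
  have h02 := mpt_mem hK h0 h2
  have h12 := mpt_mem hK h1 h2
  simp only [childL, List.mem_cons, List.not_mem_nil, or_false] at hc
  rcases hc with rfl | rfl | rfl | rfl | rfl | rfl <;> exact ⟨‹_›, ‹_›, ‹_›⟩

/-- Comparison of energies: a pointwise bound of squared increments on a convex set that contains
`t` is inherited by the energies of all subdivisions of `t`. -/
lemma subE_le {K : Set Pt} (hK : Convex ℝ K) {f g k : Pt → ℝ} {A B : ℝ}
    (h : ∀ p ∈ K, ∀ q ∈ K, (f p - f q) ^ 2 ≤ A * (g p - g q) ^ 2 + B * (k p - k q) ^ 2)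
    (n : ℕ) {t : Tri} (ht : TriIn K t) : subE n f t ≤ A * subE n g t + B * subE n k t := by
  induction n generalizing t with
  | zero =>
    have h1 := h _ ht.1 _ ht.2.1
    have h2 := h _ ht.2.1 _ ht.2.2
    have h3 := h _ ht.1 _ ht.2.2
    simp only [subE, triE]
    linarith
  | succ n ih =>
    have := fun c hc => ih (triIn_child hK ht (c := c) hc)
    simp only [subE_succ, childL, List.map_cons, List.map_nil, List.sum_cons, List.sum_nil,
      List.mem_cons, List.not_mem_nil, or_false, forall_eq_or_imp, forall_eq] at this ⊢
    linarith

lemma subE_congr {K : Set Pt} (hK : Convex ℝ K) {f g : Pt → ℝ} (h : ∀ p ∈ K, f p = g p)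
    (n : ℕ) {t : Tri} (ht : TriIn K t) : subE n f t = subE n g t := by
  apply le_antisymm
  · have := subE_le hK (f := f) (g := g) (k := g) (A := 1) (B := 0)
      (fun p hp q hq => by rw [h p hp, h q hq]; linarith) n ht
    linarith
  · have := subE_le hK (f := g) (g := f) (k := f) (A := 1) (B := 0)
      (fun p hp q hq => by rw [h p hp, h q hq]; linarith) n ht
    linarith

lemma subE_nonneg (n : ℕ) (f : Pt → ℝ) (t : Tri) : 0 ≤ subE n f t := by
  have := subE_le (K := Set.univ) convex_univ (f := fun _ => (0:ℝ)) (g := f) (k := f) (A := 1)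
    (B := 0) (fun p _ q _ => by simp; positivity) n (t := t) ⟨trivial, trivial, trivial⟩
  have h0 : ∀ n t, subE n (fun _ : Pt => (0:ℝ)) t = 0 := by
    intro n
    induction n with
    | zero => intro t; simp [subE, triE]
    | succ n ih => intro t; simp [subE_succ, childL, ih]
  rw [h0] at this
  linarith

lemma hexE_nonneg (n : ℕ) (f : Pt → ℝ) : 0 ≤ hexE n f := by
  rw [hexE_eq]
  apply List.sum_nonneg
  simp only [List.mem_map]
  rintro _ ⟨t, _, rfl⟩
  exact subE_nonneg n f t

lemma hexE_le {f g k : Pt → ℝ} {A B : ℝ}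
    (h : ∀ p q, (f p - f q) ^ 2 ≤ A * (g p - g q) ^ 2 + B * (k p - k q) ^ 2) (n : ℕ) :
    hexE n f ≤ A * hexE n g + B * hexE n k := by
  have := fun t => subE_le (K := Set.univ) convex_univ (fun p _ q _ => h p q) n (t := t)
    ⟨trivial, trivial, trivial⟩
  simp only [hexE_eq, TL, List.map_cons, List.map_nil, List.sum_cons, List.sum_nil]
  linarith [this ((1, 0), (1, 1), (0, 0)), this ((0, 1), (1, 1), (0, 0)),
    this ((0, 1), (-1, 0), (0, 0)), this ((-1, -1), (-1, 0), (0, 0)),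
    this ((-1, -1), (0, -1), (0, 0)), this ((1, 0), (0, -1), (0, 0))]

/-! ### The factors `5/4` and `4/3` -/

/-- The minimum of the energy of a subdivided triangle with prescribed values at the three corners
is `5/4` times the energy of the triangle. -/
lemma triE_le_subE_one (f : Pt → ℝ) (t : Tri) : 5 / 4 * triE f t ≤ subE 1 f t := by
  obtain ⟨a, b, c⟩ := t
  simp only [childL, List.map_cons, List.map_nil, List.sum_cons, List.sum_nil, subE, triE]
  generalize f a = x
  generalize f b = y
  generalize f c = z
  generalize f (mpt a b) = u
  generalize f (mpt b c) = v
  generalize f (mpt a c) = w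
  generalize f (bary a b c) = g
  -- squares of the deviations from the minimizer
  nlinarith [sq_nonneg (4 * u - x - y - 2 * g), sq_nonneg (4 * v - y - z - 2 * g),
    sq_nonneg (4 * w - x - z - 2 * g), sq_nonneg (3 * g - x - y - z)]

lemma triE_le_subE (n : ℕ) (f : Pt → ℝ) (t : Tri) : (5 / 4) ^ n * triE f t ≤ subE n f t := by
  induction n generalizing t with
  | zero => simp [subE]
  | succ n ih =>
    have h1 := triE_le_subE_one f t
    simp only [subE_succ, childL, List.map_cons, List.map_nil, List.sum_cons, List.sum_nil]
      at h1 ⊢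
    have hp : (0:ℝ) ≤ (5 / 4) ^ n := by positivity
    have h2 := mul_le_mul_of_nonneg_left h1 hp
    simp only [mul_add] at h2
    simp only [subE] at h2
    rw [pow_succ]
    linarith [ih (t.1, mpt t.1 t.2.1, bary t.1 t.2.1 t.2.2),
      ih (t.2.1, mpt t.1 t.2.1, bary t.1 t.2.1 t.2.2),
      ih (t.2.1, mpt t.2.1 t.2.2, bary t.1 t.2.1 t.2.2),
      ih (t.2.2, mpt t.2.1 t.2.2, bary t.1 t.2.1 t.2.2),
      ih (t.1, mpt t.1 t.2.2, bary t.1 t.2.1 t.2.2),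
      ih (t.2.2, mpt t.1 t.2.2, bary t.1 t.2.1 t.2.2)]

/-- The affine function that is `0` on the side `L_2` and `1` on the side `L_5`. -/
def linU (p : Pt) : ℝ := (1 + p.1 - p.2) / 2

/-- Each subdivision multiplies the energy of an affine function by exactly `4/3`. -/
lemma subE_linU (n : ℕ) (t : Tri) : subE n linU t = (4 / 3) ^ n * triE linU t := by
  induction n generalizing t with
  | zero => simp [subE]
  | succ n ih =>
    simp only [subE_succ, childL, List.map_cons, List.map_nil, List.sum_cons, List.sum_nil, ih,
      pow_succ, triE, linU, mpt, bary, Prod.smul_fst, Prod.smul_snd, Prod.fst_add, Prod.snd_add,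
      smul_eq_mul]
    ring

lemma hexE_linU (n : ℕ) : hexE n linU ≤ 9 * (4 / 3) ^ n := by
  have hp : (0:ℝ) ≤ (4 / 3) ^ n := by positivity
  simp only [hexE_eq, TL, List.map_cons, List.map_nil, List.sum_cons, List.sum_nil, subE_linU,
    triE, linU]
  norm_num
  linarith

/-- Admissible potentials, in skew coordinates: `0` on the side `L_2` and `1` on the side `L_5`. -/
def Adm (f : Pt → ℝ) : Prop :=
  (∀ p : Pt, p.2 - p.1 = 1 → 0 ≤ p.2 → p.2 ≤ 1 → f p = 0) ∧
  ∀ p : Pt, p.1 - p.2 = 1 → 0 ≤ p.1 → p.1 ≤ 1 → f p = 1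

lemma adm_linU : Adm linU := by
  constructor
  · intro p h _ _; simp only [linU]; linarith
  · intro p h _ _; simp only [linU]; linarith

/-- The two triangles at the corner `(1,1)` already carry energy at least `1/2`, since the path
`(0,1), (0,0), (1,0)` joins the two sides. -/
lemma hexE_ge {f : Pt → ℝ} (hf : Adm f) (n : ℕ) : 1 / 2 * (5 / 4) ^ n ≤ hexE n f := by
  have h0 : f (0, 1) = 0 := hf.1 _ (by norm_num) (by norm_num) (by norm_num)
  have h1 : f (1, 0) = 1 := hf.2 _ (by norm_num) (by norm_num) (by norm_num)
  have hp : (0:ℝ) ≤ (5 / 4) ^ n := by positivity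
  have ha : f (0, 0) ^ 2 ≤ triE f ((0, 1), (1, 1), (0, 0)) := by
    simp only [triE, h0]; nlinarith [sq_nonneg (f (1, 1)), sq_nonneg (f (1, 1) - f (0, 0))]
  have hb : (1 - f (0, 0)) ^ 2 ≤ triE f ((1, 0), (1, 1), (0, 0)) := by
    simp only [triE, h1]; nlinarith [sq_nonneg (1 - f (1, 1)), sq_nonneg (f (1, 1) - f (0, 0))]
  have hab : 1 / 2 ≤ triE f ((0, 1), (1, 1), (0, 0)) + triE f ((1, 0), (1, 1), (0, 0)) := by
    nlinarith [sq_nonneg (2 * f (0, 0) - 1)]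
  have hab' := mul_le_mul_of_nonneg_left hab hp
  have key := triE_le_subE n f
  simp only [hexE_eq, TL, List.map_cons, List.map_nil, List.sum_cons, List.sum_nil]
  linarith [key ((1, 0), (1, 1), (0, 0)), key ((0, 1), (1, 1), (0, 0)),
    subE_nonneg n f ((0, 1), (-1, 0), (0, 0)), subE_nonneg n f ((-1, -1), (-1, 0), (0, 0)),
    subE_nonneg n f ((-1, -1), (0, -1), (0, 0)), subE_nonneg n f ((1, 0), (0, -1), (0, 0))]

/-! ### Cut-off functions on the hexagon -/

lemma hexE_comp_swap (n : ℕ) (f : Pt → ℝ) : hexE n (f ∘ Prod.swap) = hexE n f := by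
  have hA : IsAff Prod.swap := ⟨fun a b => rfl, fun a b c => rfl⟩
  simp only [hexE_eq, TL, List.map_cons, List.map_nil, List.sum_cons, List.sum_nil,
    ← subE_mapT hA, mapT, Prod.swap]
  ring

/-- The reflection of the hexagon that fixes the corner `(1,0)`. -/
def refl0 (p : Pt) : Pt := (p.1 - p.2, -p.2)

/-- The rotation of the hexagon by a third of a turn. -/
def rot (p : Pt) : Pt := (-p.2, p.1 - p.2)

lemma hexE_comp_refl0 (n : ℕ) (f : Pt → ℝ) : hexE n (f ∘ refl0) = hexE n f := by
  have hA : IsAff refl0 := by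
    constructor
    · intro a b; ext <;> simp [refl0, mpt] <;> ring
    · intro a b c; ext <;> simp [refl0, bary] <;> ring
  simp only [hexE_eq, TL, List.map_cons, List.map_nil, List.sum_cons, List.sum_nil,
    ← subE_mapT hA, mapT, refl0]
  norm_num
  ring

lemma hexE_comp_rot (n : ℕ) (f : Pt → ℝ) : hexE n (f ∘ rot) = hexE n f := by
  have hA : IsAff rot := by
    constructor
    · intro a b; ext <;> simp [rot, mpt] <;> ring
    · intro a b c; ext <;> simp [rot, bary] <;> ring
  simp only [hexE_eq, TL, List.map_cons, List.map_nil, List.sum_cons, List.sum_nil,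
    ← subE_mapT hA, mapT, rot]
  norm_num
  ring

lemma convex_le : Convex ℝ {p : Pt | p.1 ≤ p.2} := by
  intro a ha b hb s t hs ht _
  simp only [Set.mem_ofPred_eq, Prod.fst_add, Prod.snd_add, Prod.smul_fst, Prod.smul_snd,
    smul_eq_mul] at *
  nlinarith [mul_le_mul_of_nonneg_left ha hs, mul_le_mul_of_nonneg_left hb ht]

lemma convex_ge : Convex ℝ {p : Pt | p.2 ≤ p.1} := by
  intro a ha b hb s t hs ht _
  simp only [Set.mem_ofPred_eq, Prod.fst_add, Prod.snd_add, Prod.smul_fst, Prod.smul_snd,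
    smul_eq_mul] at *
  nlinarith [mul_le_mul_of_nonneg_left ha hs, mul_le_mul_of_nonneg_left hb ht]

/-- From a potential `h` which is `0` on `L_2` and `1` on `L_5`, a potential which is `0` on `L_2`
and `1` on the half of the hexagon containing `L_5`. Since `h - h ∘ swap` vanishes on the axis of
the reflection `swap`, the two pieces agree there. -/
def halfCut (h : Pt → ℝ) (p : Pt) : ℝ :=
  if p.1 ≤ p.2 then max 0 (min 1 (1 + (h p - h p.swap))) else 1

lemma halfCut_nonneg (h : Pt → ℝ) (p : Pt) : 0 ≤ halfCut h p := by
  unfold halfCut; split_ifs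
  · exact le_max_left _ _
  · norm_num

lemma halfCut_le (h : Pt → ℝ) (p : Pt) : halfCut h p ≤ 1 := by
  unfold halfCut; split_ifs
  · exact max_le (by norm_num) (min_le_left _ _)
  · norm_num

lemma halfCut_one (h : Pt → ℝ) {p : Pt} (hp : p.2 ≤ p.1) : halfCut h p = 1 := by
  unfold halfCut; split_ifs with h1
  · have : p.swap = p := Prod.ext (le_antisymm hp h1) (le_antisymm h1 hp)
    simp [this]
  · rfl

lemma halfCut_zero {h : Pt → ℝ} (hh : Adm h) {p : Pt} (hp : p.2 - p.1 = 1) (h0 : 0 ≤ p.2)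
    (h1 : p.2 ≤ 1) : halfCut h p = 0 := by
  have e0 := hh.1 p hp h0 h1
  have e1 := hh.2 p.swap hp h0 h1
  unfold halfCut
  rw [if_pos (by linarith), e0, e1]
  norm_num

lemma clip_sq_le (a b : ℝ) :
    (max 0 (min 1 (1 + a)) - max 0 (min 1 (1 + b))) ^ 2 ≤ (a - b) ^ 2 := by
  have h1 := abs_max_sub_max_le_max 0 (min 1 (1 + a)) 0 (min 1 (1 + b))
  have h2 := abs_min_sub_min_le_max 1 (1 + a) 1 (1 + b)
  simp only [sub_self, abs_zero, abs_nonneg, max_eq_right, add_sub_add_left_eq_sub] at h1 h2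
  exact sq_le_sq.2 (h1.trans h2)

lemma hexE_halfCut (n : ℕ) (h : Pt → ℝ) : hexE n (halfCut h) ≤ 4 * hexE n h := by
  have h1 : hexE n (halfCut h) ≤ hexE n (fun p => h p - h p.swap) := by
    have key := fun t => subE_le convex_le (f := halfCut h) (g := fun p => h p - h p.swap)
      (k := fun _ => 0) (A := 1) (B := 0) (fun p hp q hq => by
        simp only [Set.mem_ofPred_eq] at hp hq
        simp only [halfCut, if_pos hp, if_pos hq]
        linarith [clip_sq_le (h p - h p.swap) (h q - h q.swap)]) n (t := t)
    have key' := fun t => subE_le convex_ge (f := halfCut h) (g := fun p => h p - h p.swap)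
      (k := fun _ => 0) (A := 0) (B := 0) (fun p hp q hq => by
        rw [halfCut_one h hp, halfCut_one h hq]; simp) n (t := t)
    have k1 := key ((0, 1), (1, 1), (0, 0)) (by simp [TriIn])
    have k2 := key ((0, 1), (-1, 0), (0, 0)) (by simp [TriIn])
    have k3 := key ((-1, -1), (-1, 0), (0, 0)) (by simp [TriIn])
    have k4 := key' ((1, 0), (1, 1), (0, 0)) (by simp [TriIn])
    have k5 := key' ((-1, -1), (0, -1), (0, 0)) (by simp [TriIn])
    have k6 := key' ((1, 0), (0, -1), (0, 0)) (by simp [TriIn])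
    have hn := subE_nonneg n (fun p => h p - h p.swap)
    simp only [hexE_eq, TL, List.map_cons, List.map_nil, List.sum_cons, List.sum_nil]
    linarith [hn ((1, 0), (1, 1), (0, 0)), hn ((-1, -1), (0, -1), (0, 0)),
      hn ((1, 0), (0, -1), (0, 0))]
  have h2 : hexE n (fun p => h p - h p.swap) ≤ 2 * hexE n h + 2 * hexE n (h ∘ Prod.swap) := by
    refine hexE_le (fun p q => ?_) n
    simp only [Function.comp]
    nlinarith [sq_nonneg ((h p - h q) + (h p.swap - h q.swap))]
  rw [hexE_comp_swap] at h2
  linarith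

/-- From an admissible `h`, a potential which is `1` near the corner `(1,0)` and `0` on
`L_2 ∪ L_3`. -/
def cut0 (h : Pt → ℝ) (p : Pt) : ℝ := min (halfCut h p) (halfCut h (refl0 p))

lemma min_sq_le (a b c d : ℝ) : (min a b - min c d) ^ 2 ≤ (a - c) ^ 2 + (b - d) ^ 2 := by
  have h := abs_min_sub_min_le_max a b c d
  rcases le_total |a - c| |b - d| with h' | h'
  · rw [max_eq_right h'] at h
    linarith [sq_le_sq.2 h, sq_nonneg (a - c)]
  · rw [max_eq_left h'] at h
    linarith [sq_le_sq.2 h, sq_nonneg (b - d)]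

lemma hexE_cut0 (n : ℕ) (h : Pt → ℝ) : hexE n (cut0 h) ≤ 8 * hexE n h := by
  have h1 : hexE n (cut0 h) ≤ 1 * hexE n (halfCut h) + 1 * hexE n (halfCut h ∘ refl0) := by
    refine hexE_le (fun p q => ?_) n
    simp only [one_mul]
    exact min_sq_le _ _ _ _
  rw [hexE_comp_refl0] at h1
  linarith [hexE_halfCut n h]

/-- The cut-off functions `cut0`, rotated to the three corners `(1,0)`, `(0,1)`, `(-1,-1)`. -/
def cutR (h : Pt → ℝ) (i : Fin 3) (p : Pt) : ℝ :=
  match i with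
  | 0 => cut0 h p
  | 1 => cut0 h (rot (rot p))
  | 2 => cut0 h (rot p)

lemma hexE_cutR (n : ℕ) (h : Pt → ℝ) (i : Fin 3) : hexE n (cutR h i) ≤ 8 * hexE n h := by
  have h0 := hexE_cut0 n h
  fin_cases i
  · exact h0
  · rw [← hexE_comp_rot, ← hexE_comp_rot] at h0
    exact h0
  · rw [← hexE_comp_rot] at h0
    exact h0

lemma cut0_nonneg (h : Pt → ℝ) (p : Pt) : 0 ≤ cut0 h p :=
  le_min (halfCut_nonneg _ _) (halfCut_nonneg _ _)

lemma cut0_one (h : Pt → ℝ) {p : Pt} (h1 : p.2 ≤ p.1) (h2 : 0 ≤ p.1) : cut0 h p = 1 := by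
  rw [cut0, halfCut_one h h1, halfCut_one h (by simp only [refl0]; linarith), min_self]

lemma cutR_nonneg (h : Pt → ℝ) (i : Fin 3) (p : Pt) : 0 ≤ cutR h i p := by
  fin_cases i <;> exact cut0_nonneg _ _

lemma cut0_zero_L2 {h : Pt → ℝ} (hh : Adm h) {p : Pt} (hp : p.2 - p.1 = 1) (h0 : 0 ≤ p.2)
    (h1 : p.2 ≤ 1) : cut0 h p = 0 := by
  rw [cut0, halfCut_zero hh hp h0 h1, min_eq_left (halfCut_nonneg _ _)]

lemma cut0_zero_L3 {h : Pt → ℝ} (hh : Adm h) {p : Pt} (hp : p.1 = -1) (h0 : -1 ≤ p.2)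
    (h1 : p.2 ≤ 0) : cut0 h p = 0 := by
  rw [cut0, halfCut_zero hh (p := refl0 p) (by simp only [refl0]; linarith)
    (by simp only [refl0]; linarith) (by simp only [refl0]; linarith),
    min_eq_right (halfCut_nonneg _ _)]

/-- The total mass of the three cut-off functions. -/
def cutW (h : Pt → ℝ) (p : Pt) : ℝ := cutR h 0 p + cutR h 1 p + cutR h 2 p

/-- The three regions on which the cut-off functions equal `1` cover the plane. -/
lemma one_le_cutW (h : Pt → ℝ) (p : Pt) : 1 ≤ cutW h p := by
  have h0 := cutR_nonneg h 0 p
  have h1 := cutR_nonneg h 1 p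
  have h2 := cutR_nonneg h 2 p
  have : cutR h 0 p = 1 ∨ cutR h 1 p = 1 ∨ cutR h 2 p = 1 := by
    rcases le_total p.2 p.1 with ha | ha
    · rcases le_total 0 p.1 with hb | hb
      · exact Or.inl (cut0_one h ha hb)
      · refine Or.inr (Or.inr (cut0_one h ?_ ?_)) <;> simp only [rot] <;> linarith
    · rcases le_total 0 p.2 with hb | hb
      · refine Or.inr (Or.inl (cut0_one h ?_ ?_)) <;> simp only [rot] <;> linarith
      · refine Or.inr (Or.inr (cut0_one h ?_ ?_)) <;> simp only [rot] <;> linarith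
  unfold cutW
  rcases this with h | h | h <;> linarith

/-- The partition of unity obtained by normalizing the cut-off functions. -/
def pou (h : Pt → ℝ) (i : Fin 3) (p : Pt) : ℝ := cutR h i p / cutW h p

lemma pou_sum (h : Pt → ℝ) (p : Pt) : pou h 0 p + pou h 1 p + pou h 2 p = 1 := by
  have := one_le_cutW h p
  rw [pou, pou, pou, ← add_div, ← add_div]
  exact div_self (ne_of_gt (lt_of_lt_of_le one_pos this))

lemma div_sq_le {a b s t : ℝ} (hb : 0 ≤ b) (hbt : b ≤ t) (hs : 1 ≤ s) (ht : 1 ≤ t) :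
    (a / s - b / t) ^ 2 ≤ 2 * (a - b) ^ 2 + 2 * (s - t) ^ 2 := by
  have e : a / s - b / t = (1 / s) * (a - b) + (b / t * (1 / s)) * (t - s) := by
    field_simp
    ring
  have hs' : 0 ≤ 1 / s ∧ 1 / s ≤ 1 := ⟨by positivity, by rw [div_le_one (by linarith)]; exact hs⟩
  have hb' : 0 ≤ b / t ∧ b / t ≤ 1 := ⟨by positivity, by rw [div_le_one (by linarith)]; exact hbt⟩
  rw [e]
  have h1 : (1 / s) ^ 2 ≤ 1 := by nlinarith [hs'.1, hs'.2]
  have h2 : (b / t * (1 / s)) ^ 2 ≤ 1 := by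
    rw [mul_pow]; nlinarith [hb'.1, hb'.2, sq_nonneg (1 / s), sq_nonneg (b / t)]
  have h3 := mul_le_mul_of_nonneg_right h1 (sq_nonneg (a - b))
  have h4 := mul_le_mul_of_nonneg_right h2 (sq_nonneg (t - s))
  nlinarith [sq_nonneg ((1 / s) * (a - b) - (b / t * (1 / s)) * (t - s))]

lemma hexE_pou (n : ℕ) (h : Pt → ℝ) (i : Fin 3) : hexE n (pou h i) ≤ 160 * hexE n h := by
  have hW : hexE n (cutW h) ≤ 3 * hexE n (cutR h 0) +
      1 * (3 * hexE n (cutR h 1) + 3 * hexE n (cutR h 2)) := by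
    have h1 : hexE n (cutW h) ≤ 3 * hexE n (cutR h 0) +
        (3 / 2) * hexE n (fun p => cutR h 1 p + cutR h 2 p) := by
      refine hexE_le (fun p q => ?_) n
      simp only [cutW]
      nlinarith [sq_nonneg (2 * (cutR h 0 p - cutR h 0 q) -
        ((cutR h 1 p + cutR h 2 p) - (cutR h 1 q + cutR h 2 q)))]
    have h2 : hexE n (fun p => cutR h 1 p + cutR h 2 p) ≤
        2 * hexE n (cutR h 1) + 2 * hexE n (cutR h 2) := by
      refine hexE_le (fun p q => ?_) n
      nlinarith [sq_nonneg ((cutR h 1 p - cutR h 1 q) - (cutR h 2 p - cutR h 2 q))]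
    linarith
  have h1 : hexE n (pou h i) ≤ 2 * hexE n (cutR h i) + 2 * hexE n (cutW h) := by
    refine hexE_le (fun p q => ?_) n
    refine div_sq_le (cutR_nonneg h i q) ?_ (one_le_cutW h p) (one_le_cutW h q)
    have h0 := cutR_nonneg h 0 q
    have h1 := cutR_nonneg h 1 q
    have h2 := cutR_nonneg h 2 q
    unfold cutW
    fin_cases i <;> simp <;> linarith
  linarith [hexE_cutR n h i, hexE_cutR n h 0, hexE_cutR n h 1, hexE_cutR n h 2]

/-! ### Unfolding the barycentric subdivision of a triangle to the hexagon -/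

/-- The triangle whose barycentric coordinates are the coordinates of the plane. -/
def stdTri : Tri := ((1, 0), (0, 1), (0, 0))

/-- The closed standard triangle. -/
def stdSet : Set Pt := {y | 0 ≤ y.1 ∧ 0 ≤ y.2 ∧ y.1 + y.2 ≤ 1}

/-- The piecewise affine homeomorphism of the standard triangle onto the hexagon that sends the six
triangles of the first barycentric subdivision onto the six sectors. With `y₀, y₁, y₂` the
barycentric coordinates and `P₀, P₁, P₂` the even corners of the hexagon, it is
`y ↦ ∑ i, (3/2 * y i - 1/2 * ∑ j, |y i - y j|) • P i`. -/
def hexMap (y : Pt) : Pt :=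
  (3 / 2 * y.1 - (|y.1 - y.2| + |y.1 - (1 - y.1 - y.2)|) / 2 -
    (3 / 2 * (1 - y.1 - y.2) - (|y.1 - (1 - y.1 - y.2)| + |y.2 - (1 - y.1 - y.2)|) / 2),
   3 / 2 * y.2 - (|y.1 - y.2| + |y.2 - (1 - y.1 - y.2)|) / 2 -
    (3 / 2 * (1 - y.1 - y.2) - (|y.1 - (1 - y.1 - y.2)| + |y.2 - (1 - y.1 - y.2)|) / 2))

/-- On the sets where the signs of the differences of barycentric coordinates are constant, the map
is affine. -/
lemma hexMap_eq {z p : Pt} (s t r : ℝ) (hs : |z.1 - z.2| = s * (z.1 - z.2))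
    (ht : |z.1 - (1 - z.1 - z.2)| = t * (z.1 - (1 - z.1 - z.2)))
    (hr : |z.2 - (1 - z.1 - z.2)| = r * (z.2 - (1 - z.1 - z.2)))
    (h1 : 3 / 2 * z.1 - (s * (z.1 - z.2) + t * (z.1 - (1 - z.1 - z.2))) / 2 -
      (3 / 2 * (1 - z.1 - z.2) -
        (t * (z.1 - (1 - z.1 - z.2)) + r * (z.2 - (1 - z.1 - z.2))) / 2) = p.1)
    (h2 : 3 / 2 * z.2 - (s * (z.1 - z.2) + r * (z.2 - (1 - z.1 - z.2))) / 2 -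
      (3 / 2 * (1 - z.1 - z.2) -
        (t * (z.1 - (1 - z.1 - z.2)) + r * (z.2 - (1 - z.1 - z.2))) / 2) = p.2) :
    hexMap z = p := by
  refine Prod.ext ?_ ?_ <;> simp only [hexMap, hs, ht, hr] <;> assumption

lemma childL_stdTri : childL stdTri =
    [((1, 0), (1/2, 1/2), (1/3, 1/3)), ((0, 1), (1/2, 1/2), (1/3, 1/3)),
     ((0, 1), (0, 1/2), (1/3, 1/3)), ((0, 0), (0, 1/2), (1/3, 1/3)),
     ((1, 0), (1/2, 0), (1/3, 1/3)), ((0, 0), (1/2, 0), (1/3, 1/3))] := by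
  simp [childL, stdTri, mpt, bary]

lemma aff_mk (a b c y : Pt) : aff (a, b, c) y =
    (y.1 * a.1 + y.2 * b.1 + (1 - y.1 - y.2) * c.1, y.1 * a.2 + y.2 * b.2 + (1 - y.1 - y.2) * c.2) := by
  ext <;> simp [aff]

lemma mapT_aff_stdTri (t : Tri) : mapT (aff t) stdTri = t := by
  obtain ⟨a, b, c⟩ := t
  simp [mapT, aff, stdTri]

lemma convex_stdSet : Convex ℝ stdSet := by
  intro a ha b hb s t hs ht hst
  obtain ⟨a1, a2, a3⟩ := ha
  obtain ⟨b1, b2, b3⟩ := hb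
  simp only [stdSet, Set.mem_ofPred_eq, Prod.fst_add, Prod.snd_add, Prod.smul_fst, Prod.smul_snd,
    smul_eq_mul] at *
  refine ⟨by positivity, by positivity, ?_⟩
  nlinarith [mul_le_mul_of_nonneg_left a3 hs, mul_le_mul_of_nonneg_left b3 ht]

lemma triIn_stdTri : TriIn stdSet stdTri := by
  simp [TriIn, stdSet, stdTri]

lemma subE_eq_of_hexMap {c s : Tri} (h : ∀ y ∈ stdSet, hexMap (aff c y) = aff s y) (n : ℕ)
    (f : Pt → ℝ) : subE n (f ∘ hexMap) c = subE n f s := by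
  rw [← mapT_aff_stdTri c, ← mapT_aff_stdTri s, subE_mapT (isAff_aff _), subE_mapT (isAff_aff _)]
  refine subE_congr convex_stdSet (fun y hy => ?_) n triIn_stdTri
  simp [Function.comp, h y hy]

/-- Transported by `hexMap`, the energy of a subdivided triangle is the energy on the hexagon one
level lower. -/
lemma subE_hexMap (n : ℕ) (f : Pt → ℝ) : subE (n + 1) (f ∘ hexMap) stdTri = hexE n f := by
  have key : ∀ s t r : ℝ, ∀ a b c a' b' c' : Pt, (∀ y ∈ stdSet,
      ∃ z : Pt, aff (a, b, c) y = z ∧ ∃ p : Pt, aff (a', b', c') y = p ∧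
      |z.1 - z.2| = s * (z.1 - z.2) ∧
      |z.1 - (1 - z.1 - z.2)| = t * (z.1 - (1 - z.1 - z.2)) ∧
      |z.2 - (1 - z.1 - z.2)| = r * (z.2 - (1 - z.1 - z.2)) ∧
      3 / 2 * z.1 - (s * (z.1 - z.2) + t * (z.1 - (1 - z.1 - z.2))) / 2 -
        (3 / 2 * (1 - z.1 - z.2) -
          (t * (z.1 - (1 - z.1 - z.2)) + r * (z.2 - (1 - z.1 - z.2))) / 2) = p.1 ∧
      3 / 2 * z.2 - (s * (z.1 - z.2) + r * (z.2 - (1 - z.1 - z.2))) / 2 -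
        (3 / 2 * (1 - z.1 - z.2) -
          (t * (z.1 - (1 - z.1 - z.2)) + r * (z.2 - (1 - z.1 - z.2))) / 2) = p.2) →
      subE n (f ∘ hexMap) (a, b, c) = subE n f (a', b', c') := by
    intro s t r a b c a' b' c' h
    refine subE_eq_of_hexMap (fun y hy => ?_) n f
    obtain ⟨z, rfl, p, rfl, h1, h2, h3, h4, h5⟩ := h y hy
    exact hexMap_eq s t r h1 h2 h3 h4 h5
  rw [subE_succ, childL_stdTri, hexE_eq]
  simp only [TL, List.map_cons, List.map_nil, List.sum_cons, List.sum_nil]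
  rw [key 1 1 1 (1, 0) (1/2, 1/2) (1/3, 1/3) (1, 0) (1, 1) (0, 0),
    key (-1) 1 1 (0, 1) (1/2, 1/2) (1/3, 1/3) (0, 1) (1, 1) (0, 0),
    key (-1) (-1) 1 (0, 1) (0, 1/2) (1/3, 1/3) (0, 1) (-1, 0) (0, 0),
    key (-1) (-1) (-1) (0, 0) (0, 1/2) (1/3, 1/3) (-1, -1) (-1, 0) (0, 0),
    key 1 1 (-1) (1, 0) (1/2, 0) (1/3, 1/3) (1, 0) (0, -1) (0, 0),
    key 1 (-1) (-1) (0, 0) (1/2, 0) (1/3, 1/3) (-1, -1) (0, -1) (0, 0)]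
  · ring
  all_goals
    rintro ⟨x, y⟩ ⟨h0, h1, h2⟩
    refine ⟨_, aff_mk _ _ _ _, _, aff_mk _ _ _ _, ?_, ?_, ?_, ?_, ?_⟩
    iterate 3
      first
        | rw [one_mul]; exact abs_of_nonneg (by simp only at *; linarith)
        | rw [neg_one_mul]; exact abs_of_nonpos (by simp only at *; linarith)
    · ring
    · ring

lemma cut0_zero_of_mem {h : Pt → ℝ} (hh : Adm h) {p : Pt} {y : ℝ} (h0 : 0 ≤ y) (h1 : y ≤ 1)
    (hp : 1 / 2 ≤ y → p = (2 * y - 2, 2 * y - 1)) (hp' : y ≤ 1 / 2 → p = (-1, 2 * y - 1)) :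
    cut0 h p = 0 := by
  rcases le_total (1 / 2) y with hy | hy
  · rw [hp hy]
    exact cut0_zero_L2 hh (by simp only; ring) (by simp only; linarith) (by simp only; linarith)
  · rw [hp' hy]
    exact cut0_zero_L3 hh rfl (by simp only; linarith) (by simp only; linarith)

/-- Over each side of the standard triangle, the member of the partition of unity that belongs to
the opposite vertex vanishes. -/
lemma pou_hexMap_zero {h : Pt → ℝ} (hh : Adm h) {y : Pt} (hy : y ∈ stdSet) :
    (y.1 = 0 → pou h 0 (hexMap y) = 0) ∧ (y.2 = 0 → pou h 1 (hexMap y) = 0) ∧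
      (1 - y.1 - y.2 = 0 → pou h 2 (hexMap y) = 0) := by
  obtain ⟨x, y⟩ := y
  obtain ⟨h0, h1, h2⟩ := hy
  simp only at h0 h1 h2
  refine ⟨fun hz => ?_, fun hz => ?_, fun hz => ?_⟩ <;>
    simp only at hz <;> rw [pou, cutR, div_eq_zero_iff] <;> left
  · subst hz
    refine cut0_zero_of_mem hh h1 (by linarith) (fun h3 => ?_) (fun h3 => ?_)
    · rw [hexMap_eq (z := (0, y)) (-1) (-1) 1 (p := (2 * y - 2, 2 * y - 1))
        (by rw [neg_one_mul]; exact abs_of_nonpos (by simp only; linarith))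
        (by rw [neg_one_mul]; exact abs_of_nonpos (by simp only; linarith))
        (by rw [one_mul]; exact abs_of_nonneg (by simp only; linarith))
        (by simp only; ring) (by simp only; ring)]
    · rw [hexMap_eq (z := (0, y)) (-1) (-1) (-1) (p := (-1, 2 * y - 1))
        (by rw [neg_one_mul]; exact abs_of_nonpos (by simp only; linarith))
        (by rw [neg_one_mul]; exact abs_of_nonpos (by simp only; linarith))
        (by rw [neg_one_mul]; exact abs_of_nonpos (by simp only; linarith))
        (by simp only; ring) (by simp only; ring)]
  · subst hz
    refine cut0_zero_of_mem (y := 1 - x) hh (by linarith) (by linarith)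
      (fun h3 => ?_) (fun h3 => ?_)
    · rw [hexMap_eq (z := (x, 0)) 1 (-1) (-1) (p := (2 * x - 1, -1))
        (by rw [one_mul]; exact abs_of_nonneg (by simp only; linarith))
        (by rw [neg_one_mul]; exact abs_of_nonpos (by simp only; linarith))
        (by rw [neg_one_mul]; exact abs_of_nonpos (by simp only; linarith))
        (by simp only; ring) (by simp only; ring)]
      ext <;> simp only [rot] <;> ring
    · rw [hexMap_eq (z := (x, 0)) 1 1 (-1) (p := (2 * x - 1, 2 * x - 2))
        (by rw [one_mul]; exact abs_of_nonneg (by simp only; linarith))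
        (by rw [one_mul]; exact abs_of_nonneg (by simp only; linarith))
        (by rw [neg_one_mul]; exact abs_of_nonpos (by simp only; linarith))
        (by simp only; ring) (by simp only; ring)]
      ext <;> simp only [rot] <;> ring
  · obtain rfl : y = 1 - x := by linarith
    refine cut0_zero_of_mem (y := x) hh h0 (by linarith) (fun h3 => ?_) (fun h3 => ?_)
    · rw [hexMap_eq (z := (x, 1 - x)) 1 1 1 (p := (1, 2 - 2 * x))
        (by rw [one_mul]; exact abs_of_nonneg (by simp only; linarith))
        (by rw [one_mul]; exact abs_of_nonneg (by simp only; linarith))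
        (by rw [one_mul]; exact abs_of_nonneg (by simp only; linarith))
        (by simp only; ring) (by simp only; ring)]
      ext <;> simp only [rot] <;> ring
    · rw [hexMap_eq (z := (x, 1 - x)) (-1) 1 1 (p := (2 * x, 1))
        (by rw [neg_one_mul]; exact abs_of_nonpos (by simp only; linarith))
        (by rw [one_mul]; exact abs_of_nonneg (by simp only; linarith))
        (by rw [one_mul]; exact abs_of_nonneg (by simp only; linarith))
        (by simp only; ring) (by simp only; ring)]
      ext <;> simp only [rot]

/-! ### Triangles of the subdivision meet in common faces -/

/-- The triangles of `l` form a complex: two points of triangles coincide only if they have the same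
barycentric coordinates, and then the vertices of positive weight coincide as well. -/
def Good (l : List Tri) : Prop :=
  ∀ s ∈ l, ∀ t ∈ l, ∀ x ∈ stdSet, ∀ y ∈ stdSet, aff s x = aff t y →
    x = y ∧ (x.1 ≠ 0 → s.1 = t.1) ∧ (x.2 ≠ 0 → s.2.1 = t.2.1) ∧
      (1 - x.1 - x.2 ≠ 0 → s.2.2 = t.2.2)

set_option maxHeartbeats 1000000 in
lemma good_TL_zero : Good (TL 0) := by
  rintro s hs t ht ⟨x1, x2⟩ ⟨h1, h2, h3⟩ ⟨y1, y2⟩ ⟨k1, k2, k3⟩ h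
  simp only [TL, List.mem_cons, List.not_mem_nil, or_false] at hs ht
  simp only at h1 h2 h3 k1 k2 k3
  rcases hs with rfl | rfl | rfl | rfl | rfl | rfl <;>
    rcases ht with rfl | rfl | rfl | rfl | rfl | rfl <;>
    simp only [aff_mk, Prod.mk.injEq] at h <;> obtain ⟨e1, e2⟩ := h <;>
    refine ⟨Prod.ext (by simp only; linarith) (by simp only; linarith), ?_, ?_, ?_⟩ <;>
    intro hx <;> simp only at hx ⊢ <;> exact absurd (by linarith) hx

set_option maxHeartbeats 2000000 in
lemma good_childL : Good (childL stdTri) := by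
  rintro s hs t ht ⟨x1, x2⟩ ⟨h1, h2, h3⟩ ⟨y1, y2⟩ ⟨k1, k2, k3⟩ h
  simp only [childL_stdTri, List.mem_cons, List.not_mem_nil, or_false] at hs ht
  simp only at h1 h2 h3 k1 k2 k3
  rcases hs with rfl | rfl | rfl | rfl | rfl | rfl <;>
    rcases ht with rfl | rfl | rfl | rfl | rfl | rfl <;>
    simp only [aff_mk, Prod.mk.injEq] at h <;> obtain ⟨e1, e2⟩ := h <;>
    refine ⟨Prod.ext (by simp only; linarith) (by simp only; linarith), ?_, ?_, ?_⟩ <;>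
    intro hx <;> simp only at hx ⊢ <;> exact absurd (by linarith) hx

lemma aff_mem {K : Set Pt} (hK : Convex ℝ K) {t : Tri} (ht : TriIn K t) {y : Pt}
    (hy : y ∈ stdSet) : aff t y ∈ K := by
  obtain ⟨h0, h1, h2⟩ := hy
  rw [aff]
  have h3 : 0 ≤ 1 - y.1 - y.2 := by linarith
  rcases eq_or_lt_of_le (add_nonneg h0 h1) with h | h
  · rw [(by linarith : y.1 = 0), (by linarith : y.2 = 0)]
    simpa using ht.2.2
  · have h4 := hK ht.1 ht.2.1 (a := y.1 / (y.1 + y.2)) (b := y.2 / (y.1 + y.2)) (by positivity)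
      (by positivity) (by field_simp)
    have h5 := hK h4 ht.2.2 h.le h3 (by ring)
    rwa [smul_add, smul_smul, smul_smul, mul_div_cancel₀ _ h.ne', mul_div_cancel₀ _ h.ne'] at h5

lemma aff_mapT (s t : Tri) (y : Pt) : aff (mapT (aff s) t) y = aff s (aff t y) := by
  ext <;> simp [aff, mapT] <;> ring

lemma mem_TL_succ {n : ℕ} {c : Tri} :
    c ∈ TL (n + 1) ↔ ∃ t ∈ TL n, ∃ c₀ ∈ childL stdTri, mapT (aff t) c₀ = c := by
  rw [TL, List.mem_flatMap]
  refine exists_congr fun t => and_congr_right fun _ => ?_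
  nth_rewrite 1 [← mapT_aff_stdTri t]
  rw [childL_mapT (isAff_aff t), List.mem_map]

lemma aff_congr {s t : Tri} {v : Pt} (h1 : v.1 ≠ 0 → s.1 = t.1) (h2 : v.2 ≠ 0 → s.2.1 = t.2.1)
    (h3 : 1 - v.1 - v.2 ≠ 0 → s.2.2 = t.2.2) : aff s v = aff t v := by
  have e1 : v.1 • s.1 = v.1 • t.1 := by
    by_cases h : v.1 = 0
    · rw [h, zero_smul, zero_smul]
    · rw [h1 h]
  have e2 : v.2 • s.2.1 = v.2 • t.2.1 := by
    by_cases h : v.2 = 0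
    · rw [h, zero_smul, zero_smul]
    · rw [h2 h]
  have e3 : (1 - v.1 - v.2) • s.2.2 = (1 - v.1 - v.2) • t.2.2 := by
    by_cases h : 1 - v.1 - v.2 = 0
    · rw [h, zero_smul, zero_smul]
    · rw [h3 h]
  rw [aff, aff, e1, e2, e3]

lemma add3_ne {a p b q c r : ℝ} (ha : 0 ≤ a) (hp : 0 ≤ p) (hb : 0 ≤ b) (hq : 0 ≤ q) (hc : 0 ≤ c)
    (hr : 0 ≤ r) (h : (a ≠ 0 ∧ p ≠ 0) ∨ (b ≠ 0 ∧ q ≠ 0) ∨ (c ≠ 0 ∧ r ≠ 0)) :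
    a * p + b * q + c * r ≠ 0 := by
  have h1 := mul_nonneg ha hp
  have h2 := mul_nonneg hb hq
  have h3 := mul_nonneg hc hr
  intro h0
  have e1 : a * p = 0 := by linarith
  have e2 : b * q = 0 := by linarith
  have e3 : c * r = 0 := by linarith
  rw [mul_eq_zero] at e1 e2 e3
  tauto

/-- A barycentric coordinate that is positive at a vertex of positive weight is positive at the
point. -/
lemma aff_ne {c : Tri} (hc : TriIn stdSet c) {x : Pt} (hx : x ∈ stdSet) {v : Pt}
    (hv : (x.1 ≠ 0 ∧ v = c.1) ∨ (x.2 ≠ 0 ∧ v = c.2.1) ∨ (1 - x.1 - x.2 ≠ 0 ∧ v = c.2.2)) :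
    (v.1 ≠ 0 → (aff c x).1 ≠ 0) ∧ (v.2 ≠ 0 → (aff c x).2 ≠ 0) ∧
      (1 - v.1 - v.2 ≠ 0 → 1 - (aff c x).1 - (aff c x).2 ≠ 0) := by
  obtain ⟨⟨p0, p1, p2⟩, ⟨q0, q1, q2⟩, ⟨r0, r1, r2⟩⟩ := hc
  obtain ⟨x0, x1, x2⟩ := hx
  have e1 : (aff c x).1 = x.1 * c.1.1 + x.2 * c.2.1.1 + (1 - x.1 - x.2) * c.2.2.1 := by simp [aff]
  have e2 : (aff c x).2 = x.1 * c.1.2 + x.2 * c.2.1.2 + (1 - x.1 - x.2) * c.2.2.2 := by simp [aff]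
  have e3 : 1 - (aff c x).1 - (aff c x).2 = x.1 * (1 - c.1.1 - c.1.2) +
      x.2 * (1 - c.2.1.1 - c.2.1.2) + (1 - x.1 - x.2) * (1 - c.2.2.1 - c.2.2.2) := by
    rw [e1, e2]; ring
  rw [e3, e1, e2]
  refine ⟨fun h => add3_ne x0 p0 x1 q0 (by linarith) r0 ?_,
    fun h => add3_ne x0 p1 x1 q1 (by linarith) r1 ?_,
    fun h => add3_ne x0 (by linarith) x1 (by linarith) (by linarith) (by linarith) ?_⟩ <;>
  · rcases hv with ⟨hv, rfl⟩ | ⟨hv, rfl⟩ | ⟨hv, rfl⟩ <;> tauto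

lemma triIn_childL_stdTri {c : Tri} (hc : c ∈ childL stdTri) : TriIn stdSet c :=
  triIn_child convex_stdSet triIn_stdTri hc

/-- The face-to-face property is inherited by subdivisions: it holds within one triangle by
`good_childL`, and across triangles because a positive coordinate in a child forces a positive
coordinate in its parent. -/
lemma good_TL (n : ℕ) : Good (TL n) := by
  induction n with
  | zero => exact good_TL_zero
  | succ n ih =>
    intro s hs t ht x hx y hy h
    obtain ⟨s', hs', s₀, hs₀, rfl⟩ := mem_TL_succ.1 hs
    obtain ⟨t', ht', t₀, ht₀, rfl⟩ := mem_TL_succ.1 ht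
    have hsi := triIn_childL_stdTri hs₀
    rw [aff_mapT, aff_mapT] at h
    obtain ⟨e, g1, g2, g3⟩ := ih _ hs' _ ht' _ (aff_mem convex_stdSet hsi hx) _
      (aff_mem convex_stdSet (triIn_childL_stdTri ht₀) hy) h
    obtain ⟨e', k1, k2, k3⟩ := good_childL _ hs₀ _ ht₀ _ hx _ hy e
    refine ⟨e', fun hz => ?_, fun hz => ?_, fun hz => ?_⟩
    · obtain ⟨a1, a2, a3⟩ := aff_ne hsi hx (Or.inl ⟨hz, rfl⟩)
      simp only [mapT]
      rw [← k1 hz]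
      exact aff_congr (fun h => g1 (a1 h)) (fun h => g2 (a2 h)) (fun h => g3 (a3 h))
    · obtain ⟨a1, a2, a3⟩ := aff_ne hsi hx (Or.inr (Or.inl ⟨hz, rfl⟩))
      simp only [mapT]
      rw [← k2 hz]
      exact aff_congr (fun h => g1 (a1 h)) (fun h => g2 (a2 h)) (fun h => g3 (a3 h))
    · obtain ⟨a1, a2, a3⟩ := aff_ne hsi hx (Or.inr (Or.inr ⟨hz, rfl⟩))
      simp only [mapT]
      rw [← k3 hz]
      exact aff_congr (fun h => g1 (a1 h)) (fun h => g2 (a2 h)) (fun h => g3 (a3 h))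

/-- The closed hexagon, in skew coordinates. -/
def hex : Set Pt := {p | -1 ≤ p.1 ∧ p.1 ≤ 1 ∧ -1 ≤ p.2 ∧ p.2 ≤ 1 ∧ -1 ≤ p.1 - p.2 ∧ p.1 - p.2 ≤ 1}

lemma convex_hex : Convex ℝ hex := by
  intro a ha b hb s t hs ht hst
  obtain ⟨a1, a2, a3, a4, a5, a6⟩ := ha
  obtain ⟨b1, b2, b3, b4, b5, b6⟩ := hb
  simp only [hex, Set.mem_ofPred_eq, Prod.fst_add, Prod.snd_add, Prod.smul_fst, Prod.smul_snd,
    smul_eq_mul] at *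
  obtain rfl : t = 1 - s := by linarith
  refine ⟨?_, ?_, ?_, ?_, ?_, ?_⟩ <;> nlinarith

lemma triIn_TL (n : ℕ) : ∀ t ∈ TL n, TriIn hex t := by
  induction n with
  | zero =>
    intro t ht
    simp only [TL, List.mem_cons, List.not_mem_nil, or_false] at ht
    rcases ht with rfl | rfl | rfl | rfl | rfl | rfl <;> norm_num [TriIn, hex]
  | succ n ih =>
    intro t ht
    rw [TL, List.mem_flatMap] at ht
    obtain ⟨s, hs, hc⟩ := ht
    exact triIn_child convex_hex (ih s hs) hc

/-- Twice the signed area of a triangle. -/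
def area (t : Tri) : ℝ :=
  (t.1.1 - t.2.2.1) * (t.2.1.2 - t.2.2.2) - (t.1.2 - t.2.2.2) * (t.2.1.1 - t.2.2.1)

lemma area_mapT (s t : Tri) : area (mapT (aff s) t) = area s * area t := by
  simp [area, mapT, aff]; ring

lemma area_ne (n : ℕ) : ∀ t ∈ TL n, area t ≠ 0 := by
  induction n with
  | zero =>
    intro t ht
    simp only [TL, List.mem_cons, List.not_mem_nil, or_false] at ht
    rcases ht with rfl | rfl | rfl | rfl | rfl | rfl <;> norm_num [area]
  | succ n ih =>
    intro t ht
    obtain ⟨s, hs, c, hc, rfl⟩ := mem_TL_succ.1 ht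
    rw [area_mapT]
    refine mul_ne_zero (ih s hs) ?_
    simp only [childL_stdTri, List.mem_cons, List.not_mem_nil, or_false] at hc
    rcases hc with rfl | rfl | rfl | rfl | rfl | rfl <;> norm_num [area]

lemma nodup_TL (n : ℕ) : (TL n).Nodup := by
  induction n with
  | zero => norm_num [TL]
  | succ n ih =>
    rw [TL, List.nodup_flatMap]
    constructor
    · intro t ht
      rw [← mapT_aff_stdTri t, childL_mapT (isAff_aff t)]
      refine List.Nodup.map_on ?_ (by rw [childL_stdTri]; norm_num)
      rintro ⟨a, b, c⟩ hx ⟨a', b', c'⟩ hy h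
      obtain ⟨h1, h2, h3⟩ := triIn_childL_stdTri hx
      obtain ⟨k1, k2, k3⟩ := triIn_childL_stdTri hy
      simp only [mapT, Prod.mk.injEq] at h
      exact Prod.ext (good_TL n t ht t ht _ h1 _ k1 h.1).1
        (Prod.ext (good_TL n t ht t ht _ h2 _ k2 h.2.1).1
          (good_TL n t ht t ht _ h3 _ k3 h.2.2).1)
    · refine List.Pairwise.imp_of_mem ?_ ih
      intro s t hs ht hne c hc hc'
      refine hne ?_
      have hb : ∀ t : Tri, c ∈ childL t → c.2.2 = aff t (1 / 3, 1 / 3) := by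
        intro t hc
        have : c.2.2 = bary t.1 t.2.1 t.2.2 := by
          simp only [childL, List.mem_cons, List.not_mem_nil, or_false] at hc
          rcases hc with rfl | rfl | rfl | rfl | rfl | rfl <;> rfl
        rw [this]
        ext <;> simp only [bary, aff, Prod.fst_add, Prod.snd_add, Prod.smul_fst, Prod.smul_snd,
          smul_eq_mul] <;> ring
      have hm : ((1 / 3, 1 / 3) : Pt) ∈ stdSet := by norm_num [stdSet]
      obtain ⟨-, h1, h2, h3⟩ := good_TL n s hs t ht _ hm _ hm ((hb s hc).symm.trans (hb t hc'))
      exact Prod.ext (h1 (by norm_num)) (Prod.ext (h2 (by norm_num)) (h3 (by norm_num)))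

/-- Two triangles on the same side of a common edge overlap, and hence coincide. -/
lemma Good.eq_of_edge {l : List Tri} (hl : Good l) {s t : Tri} (hs : s ∈ l) (ht : t ∈ l)
    (h1 : s.1 = t.1) (h2 : s.2.1 = t.2.1) (ha : 0 < area s * area t) : s = t := by
  refine Prod.ext h1 (Prod.ext h2 ?_)
  obtain ⟨a, b, c⟩ := s
  obtain ⟨a', b', c'⟩ := t
  simp only at h1 h2 ⊢
  subst h1 h2
  have hs0 : area (a, b, c) ≠ 0 := left_ne_zero_of_mul ha.ne'
  -- `(u, v, w)` are the barycentric coordinates of `c'` with respect to `(a, b, c)`.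
  obtain ⟨u, hu⟩ : ∃ u, u = area (c', b, c) / area (a, b, c) := ⟨_, rfl⟩
  obtain ⟨v, hv⟩ : ∃ v, v = area (a, c', c) / area (a, b, c) := ⟨_, rfl⟩
  obtain ⟨w, hw⟩ : ∃ w, w = area (a, b, c') / area (a, b, c) := ⟨_, rfl⟩
  have hw0 : 0 < w := by
    rw [hw]
    rcases lt_or_gt_of_ne hs0 with h | h
    · exact div_pos_of_neg_of_neg (by nlinarith) h
    · exact div_pos (by nlinarith) h
  have huvw : u + v + w = 1 := by
    rw [hu, hv, hw, ← add_div, ← add_div, div_eq_one_iff_eq hs0]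
    simp only [area]; ring
  have e1 : c'.1 = u * a.1 + v * b.1 + w * c.1 := by
    rw [hu, hv, hw]; field_simp; simp only [area]; ring
  have e2 : c'.2 = u * a.2 + v * b.2 + w * c.2 := by
    rw [hu, hv, hw]; field_simp; simp only [area]; ring
  -- A point of the second triangle, close to the edge, lies in the first one.
  obtain ⟨m, hm⟩ : ∃ m, m = 1 + |u| + |v| := ⟨_, rfl⟩
  have hm1 : 1 ≤ m := by rw [hm]; linarith [abs_nonneg u, abs_nonneg v]
  obtain ⟨e, he⟩ : ∃ e, e = 1 / (2 * m + 1) := ⟨_, rfl⟩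
  have he0 : 0 < e := by rw [he]; positivity
  have he1 : 2 * (e * m) + e = 1 := by rw [he]; field_simp
  have hu' : 0 ≤ e * m + e * u := by
    rw [← mul_add]; exact mul_nonneg he0.le (by linarith [neg_abs_le u, abs_nonneg v])
  have hv' : 0 ≤ e * m + e * v := by
    rw [← mul_add]; exact mul_nonneg he0.le (by linarith [neg_abs_le v, abs_nonneg u])
  have hw' : 0 < e * w := mul_pos he0 hw0
  have hem : 0 < e * m := mul_pos he0 (by linarith)
  have hsum : e * u + e * v + e * w = e := by rw [← mul_add, ← mul_add, huvw, mul_one]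
  obtain ⟨-, -, -, h3⟩ := hl _ hs _ ht (e * m + e * u, e * m + e * v)
    ⟨hu', hv', by simp only; linarith⟩ (e * m, e * m) ⟨hem.le, hem.le, by simp only; linarith⟩ (by
      rw [aff_mk, aff_mk, e1, e2]
      simp only [Prod.mk.injEq]
      rw [(by linarith : 1 - (e * m + e * u) - (e * m + e * v) = e * w),
        (by linarith : 1 - e * m - e * m = e)]
      constructor <;> ring)
  refine h3 ?_
  simp only
  linarith

/-- Cyclic relabelling of the vertices of a triangle. -/
def rotT (t : Tri) : Tri := (t.2.1, t.2.2, t.1)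

lemma Good.map_rotT {l : List Tri} (hl : Good l) : Good (l.map rotT) := by
  intro s hs t ht x hx y hy h
  obtain ⟨s', hs', rfl⟩ := List.mem_map.1 hs
  obtain ⟨t', ht', rfl⟩ := List.mem_map.1 ht
  have hmem : ∀ z ∈ stdSet, ((1 - z.1 - z.2, z.1) : Pt) ∈ stdSet := by
    rintro z ⟨h0, h1, h2⟩
    exact ⟨by simp only; linarith, h0, by simp only; linarith⟩
  have haff : ∀ (r : Tri) (z : Pt), aff (rotT r) z = aff r (1 - z.1 - z.2, z.1) := by
    intro r z
    ext <;> simp [rotT, aff] <;> ring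
  rw [haff, haff] at h
  obtain ⟨e, h1, h2, h3⟩ := hl s' hs' t' ht' _ (hmem x hx) _ (hmem y hy) h
  simp only [Prod.mk.injEq] at e
  refine ⟨Prod.ext e.2 (by linarith), h2, fun hz => h3 ?_, h1⟩
  simp only
  intro h0
  exact hz (by linarith)

lemma area_rotT (t : Tri) : area (rotT t) = area t := by
  simp only [area, rotT]; ring

open Classical in
/-- At most two triangles share an edge. -/
lemma Good.card_edge {l : List Tri} (hl : Good l) (ha : ∀ t ∈ l, area t ≠ 0) (e : Pt × Pt) :
    (l.toFinset.filter fun t => (t.1, t.2.1) = e).card ≤ 2 := by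
  rw [← Fintype.card_bool, ← Finset.card_univ]
  refine Finset.card_le_card_of_injOn (fun t => decide (0 < area t)) (fun _ _ => Finset.mem_coe.2 (Finset.mem_univ _)) ?_
  intro s hs t ht h
  simp only [Finset.coe_filter, List.mem_toFinset, Set.mem_ofPred_eq] at hs ht
  have he := hs.2.trans ht.2.symm
  simp only [Prod.mk.injEq] at he
  refine hl.eq_of_edge hs.1 ht.1 he.1 he.2 ?_
  simp only [decide_eq_decide] at h
  rcases lt_or_gt_of_ne (ha s hs.1) with h1 | h1
  · have h2 : ¬ 0 < area t := fun h2 => absurd (h.2 h2) (not_lt.2 h1.le)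
    exact mul_pos_of_neg_of_neg h1 (lt_of_le_of_ne (not_lt.1 h2) (ha t ht.1))
  · exact mul_pos h1 (h.1 h1)

open Classical in
/-- Summing over triangles a nonnegative quantity attached to one of their edges overcounts at most
by a factor of two. -/
lemma Good.sum_edge_le {l : List Tri} (hl : Good l) (ha : ∀ t ∈ l, area t ≠ 0) (φ : Pt × Pt → ℝ)
    (hφ : ∀ e, 0 ≤ φ e) : ∑ t ∈ l.toFinset, φ (t.1, t.2.1) ≤
      2 * ∑ e ∈ l.toFinset.image fun t => (t.1, t.2.1), φ e := by
  rw [Finset.sum_comp φ fun t : Tri => (t.1, t.2.1), Finset.mul_sum]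
  refine Finset.sum_le_sum fun e _ => ?_
  rw [nsmul_eq_mul]
  exact mul_le_mul_of_nonneg_right (by exact_mod_cast hl.card_edge ha e) (hφ e)

lemma sum_image_le {α β : Type*} [DecidableEq β] (s : Finset α) (g : α → β) (φ : β → ℝ)
    (hφ : ∀ e, 0 ≤ φ e) : ∑ e ∈ s.image g, φ e ≤ ∑ t ∈ s, φ (g t) := by
  rw [Finset.sum_comp φ g]
  refine Finset.sum_le_sum fun e he => ?_
  rw [nsmul_eq_mul]
  refine le_mul_of_one_le_left (hφ e) ?_
  obtain ⟨a, ha, rfl⟩ := Finset.mem_image.1 he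
  have : 0 < (s.filter fun b => g b = g a).card :=
    Finset.card_pos.2 ⟨a, Finset.mem_filter.2 ⟨ha, rfl⟩⟩
  exact_mod_cast this

/-! ### Composition of potentials -/

/-- The interpolation on the triangle `t` of the values of `g` at its vertices by means of the
partition of unity, as a function of barycentric coordinates. -/
def loc (g h : Pt → ℝ) (t : Tri) (y : Pt) : ℝ :=
  g t.1 * pou h 0 (hexMap y) + g t.2.1 * pou h 1 (hexMap y) + g t.2.2 * pou h 2 (hexMap y)

/-- The interpolation depends only on the values at the vertices of the face that contains the
point. -/
lemma loc_congr {g h : Pt → ℝ} (hh : Adm h) {s t : Tri} {y : Pt} (hy : y ∈ stdSet)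
    (h1 : y.1 ≠ 0 → g s.1 = g t.1) (h2 : y.2 ≠ 0 → g s.2.1 = g t.2.1)
    (h3 : 1 - y.1 - y.2 ≠ 0 → g s.2.2 = g t.2.2) : loc g h s y = loc g h t y := by
  obtain ⟨k1, k2, k3⟩ := pou_hexMap_zero hh hy
  have e1 : g s.1 * pou h 0 (hexMap y) = g t.1 * pou h 0 (hexMap y) := by
    by_cases h0 : y.1 = 0
    · rw [k1 h0, mul_zero, mul_zero]
    · rw [h1 h0]
  have e2 : g s.2.1 * pou h 1 (hexMap y) = g t.2.1 * pou h 1 (hexMap y) := by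
    by_cases h0 : y.2 = 0
    · rw [k2 h0, mul_zero, mul_zero]
    · rw [h2 h0]
  have e3 : g s.2.2 * pou h 2 (hexMap y) = g t.2.2 * pou h 2 (hexMap y) := by
    by_cases h0 : 1 - y.1 - y.2 = 0
    · rw [k3 h0, mul_zero, mul_zero]
    · rw [h3 h0]
  rw [loc, loc, e1, e2, e3]

lemma loc_const {g h : Pt → ℝ} (hh : Adm h) {t : Tri} {y : Pt} (hy : y ∈ stdSet) {c : ℝ}
    (h1 : y.1 ≠ 0 → g t.1 = c) (h2 : y.2 ≠ 0 → g t.2.1 = c)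
    (h3 : 1 - y.1 - y.2 ≠ 0 → g t.2.2 = c) : loc g h t y = c := by
  obtain ⟨k1, k2, k3⟩ := pou_hexMap_zero hh hy
  have e1 : g t.1 * pou h 0 (hexMap y) = c * pou h 0 (hexMap y) := by
    by_cases h0 : y.1 = 0
    · rw [k1 h0, mul_zero, mul_zero]
    · rw [h1 h0]
  have e2 : g t.2.1 * pou h 1 (hexMap y) = c * pou h 1 (hexMap y) := by
    by_cases h0 : y.2 = 0
    · rw [k2 h0, mul_zero, mul_zero]
    · rw [h2 h0]
  have e3 : g t.2.2 * pou h 2 (hexMap y) = c * pou h 2 (hexMap y) := by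
    by_cases h0 : 1 - y.1 - y.2 = 0
    · rw [k3 h0, mul_zero, mul_zero]
    · rw [h3 h0]
  rw [loc, e1, e2, e3, ← mul_add, ← mul_add, pou_sum, mul_one]

/-- If a convex combination attains the maximum of its terms, then so do all terms of positive
weight. -/
lemma eq_of_combo {a b c x y M : ℝ} (h0 : 0 ≤ x) (h1 : 0 ≤ y) (h2 : x + y ≤ 1) (ha : a ≤ M)
    (hb : b ≤ M) (hc : c ≤ M) (h : x * a + y * b + (1 - x - y) * c = M) :
    (x ≠ 0 → a = M) ∧ (y ≠ 0 → b = M) ∧ (1 - x - y ≠ 0 → c = M) := by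
  have e1 := mul_nonneg h0 (sub_nonneg.2 ha)
  have e2 := mul_nonneg h1 (sub_nonneg.2 hb)
  have e3 := mul_nonneg (by linarith : 0 ≤ 1 - x - y) (sub_nonneg.2 hc)
  have f1 : x * (M - a) = 0 := by linarith
  have f2 : y * (M - b) = 0 := by linarith
  have f3 : (1 - x - y) * (M - c) = 0 := by linarith
  refine ⟨fun h => ?_, fun h => ?_, fun h => ?_⟩
  · linarith [(mul_eq_zero.1 f1).resolve_left h]
  · linarith [(mul_eq_zero.1 f2).resolve_left h]
  · linarith [(mul_eq_zero.1 f3).resolve_left h]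

open Classical in
/-- The composition of the potentials `g` and `h`: on each triangle of `TL m` the values of `g` at
the vertices are interpolated by the partition of unity made from `h`. The values on the sides `L_2`
and `L_5` are prescribed; they are consistent with the interpolation. -/
def interp (m : ℕ) (g h : Pt → ℝ) (p : Pt) : ℝ :=
  if p.2 - p.1 = 1 ∧ 0 ≤ p.2 ∧ p.2 ≤ 1 then 0
  else if p.1 - p.2 = 1 ∧ 0 ≤ p.1 ∧ p.1 ≤ 1 then 1
  else if H : ∃ s : Tri × Pt, s.1 ∈ TL m ∧ s.2 ∈ stdSet ∧ aff s.1 s.2 = p then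
    loc g h H.choose.1 H.choose.2
  else 0

lemma interp_adm (m : ℕ) (g h : Pt → ℝ) : Adm (interp m g h) := by
  constructor
  · intro p h1 h2 h3
    rw [interp, if_pos ⟨h1, h2, h3⟩]
  · intro p h1 h2 h3
    rw [interp, if_neg (fun h => by linarith [h.1]), if_pos ⟨h1, h2, h3⟩]

/-- By `good_TL` and `loc_congr` the interpolation does not depend on the triangle used to compute
it, and it is compatible with the boundary values because a side of the hexagon meets a triangle
in a face. -/
lemma interp_aff {m : ℕ} {g h : Pt → ℝ} (hg : Adm g) (hh : Adm h) {t : Tri} (ht : t ∈ TL m)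
    {y : Pt} (hy : y ∈ stdSet) : interp m g h (aff t y) = loc g h t y := by
  have e1 : (aff t y).1 = y.1 * t.1.1 + y.2 * t.2.1.1 + (1 - y.1 - y.2) * t.2.2.1 := by simp [aff]
  have e2 : (aff t y).2 = y.1 * t.1.2 + y.2 * t.2.1.2 + (1 - y.1 - y.2) * t.2.2.2 := by simp [aff]
  obtain ⟨⟨a1, a2, a3, a4, a5, a6⟩, ⟨b1, b2, b3, b4, b5, b6⟩, ⟨c1, c2, c3, c4, c5, c6⟩⟩ :=
    triIn_TL m t ht
  rw [interp]
  split_ifs with H1 H2 H3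
  · obtain ⟨k1, k2, k3⟩ := eq_of_combo hy.1 hy.2.1 hy.2.2 (a := t.1.2 - t.1.1)
      (b := t.2.1.2 - t.2.1.1) (c := t.2.2.2 - t.2.2.1) (M := 1) (by linarith) (by linarith)
      (by linarith) (by linarith [H1.1])
    refine (loc_const hh hy (fun hz => ?_) (fun hz => ?_) fun hz => ?_).symm
    · exact hg.1 _ (k1 hz) (by linarith [k1 hz]) a4
    · exact hg.1 _ (k2 hz) (by linarith [k2 hz]) b4
    · exact hg.1 _ (k3 hz) (by linarith [k3 hz]) c4
  · obtain ⟨k1, k2, k3⟩ := eq_of_combo hy.1 hy.2.1 hy.2.2 (a := t.1.1 - t.1.2)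
      (b := t.2.1.1 - t.2.1.2) (c := t.2.2.1 - t.2.2.2) (M := 1) (by linarith) (by linarith)
      (by linarith) (by linarith [H2.1])
    refine (loc_const hh hy (fun hz => ?_) (fun hz => ?_) fun hz => ?_).symm
    · exact hg.2 _ (k1 hz) (by linarith [k1 hz]) a2
    · exact hg.2 _ (k2 hz) (by linarith [k2 hz]) b2
    · exact hg.2 _ (k3 hz) (by linarith [k3 hz]) c2
  · obtain ⟨k1, k2, k3⟩ := H3.choose_spec
    obtain ⟨l1, l2, l3, l4⟩ := good_TL m _ ht _ k1 _ hy _ k2 k3.symm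
    rw [← l1]
    exact (loc_congr hh hy (fun hz => by rw [l2 hz]) (fun hz => by rw [l3 hz])
      (fun hz => by rw [l4 hz])).symm
  · exact absurd ⟨(t, y), ht, hy, rfl⟩ H3

/-- The energy of the composed potential is at most a constant times the product of the energies of
its two factors. -/
lemma hexE_interp_le {g h : Pt → ℝ} (hg : Adm g) (hh : Adm h) (m n : ℕ) :
    hexE (m + (n + 1)) (interp m g h) ≤ 320 * hexE m g * hexE n h := by
  rw [← sum_subE, mul_comm (320 : ℝ), mul_assoc, hexE, ← List.sum_map_mul_right]
  refine List.sum_le_sum fun t ht => ?_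
  have e : subE (n + 1) (interp m g h) t = hexE n fun p =>
      g t.1 * pou h 0 p + g t.2.1 * pou h 1 p + g t.2.2 * pou h 2 p := by
    rw [← subE_hexMap, ← mapT_aff_stdTri t, subE_mapT (isAff_aff t), mapT_aff_stdTri]
    exact subE_congr convex_stdSet (fun y hy => interp_aff hg hh ht hy) _ triIn_stdTri
  have h1 : hexE n (fun p => g t.1 * pou h 0 p + g t.2.1 * pou h 1 p + g t.2.2 * pou h 2 p) ≤
      2 * (g t.1 - g t.2.2) ^ 2 * hexE n (pou h 0) +
        2 * (g t.2.1 - g t.2.2) ^ 2 * hexE n (pou h 1) := by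
    refine hexE_le (fun p q => ?_) n
    have e2 : ∀ p, pou h 2 p = 1 - pou h 0 p - pou h 1 p := fun p => by linarith [pou_sum h p]
    rw [e2, e2]
    nlinarith [sq_nonneg ((g t.1 - g t.2.2) * (pou h 0 p - pou h 0 q) -
      (g t.2.1 - g t.2.2) * (pou h 1 p - pou h 1 q))]
  have h2 := mul_le_mul_of_nonneg_left (hexE_pou n h 0)
    (by positivity : 0 ≤ 2 * (g t.1 - g t.2.2) ^ 2)
  have h3 := mul_le_mul_of_nonneg_left (hexE_pou n h 1)
    (by positivity : 0 ≤ 2 * (g t.2.1 - g t.2.2) ^ 2)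
  have h4 := mul_nonneg (sq_nonneg (g t.1 - g t.2.1)) (hexE_nonneg n h)
  rw [e, triE]
  nlinarith

/-! ### Skew coordinates and the energy of the graph -/

/-- The linear isomorphism from skew coordinates to the plane of the regular hexagon. -/
def emb (p : Pt) : Pt := (p.1 - p.2 / 2, √3 / 2 * p.2)

/-- The inverse of `emb`. -/
def embInv (q : Pt) : Pt := (q.1 + q.2 / √3, 2 * q.2 / √3)

lemma embInv_emb (p : Pt) : embInv (emb p) = p := by
  have h : √3 ≠ 0 := by positivity
  ext <;> simp only [emb, embInv] <;> field_simp
  ring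

lemma emb_injective : Function.Injective emb := fun p q h => by
  rw [← embInv_emb p, h, embInv_emb]

lemma isAff_emb : IsAff emb := by
  constructor
  · intro a b; ext <;> simp [emb, mpt] <;> ring
  · intro a b c; ext <;> simp [emb, bary] <;> ring

lemma emb_combo (a b : ℝ) (p q : Pt) : emb (a • p + b • q) = a • emb p + b • emb q := by
  ext <;> simp [emb] <;> ring

lemma cos_two : Real.cos (2 * (Real.pi / 3)) = -1 / 2 := by
  rw [Real.cos_two_mul, Real.cos_pi_div_three]; norm_num

lemma sin_two : Real.sin (2 * (Real.pi / 3)) = √3 / 2 := by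
  rw [Real.sin_two_mul, Real.cos_pi_div_three, Real.sin_pi_div_three]; ring

lemma hexCorner_add_three (i : ℕ) : hexCorner (i + 3) = -hexCorner i := by
  have : ((i + 3 : ℕ) : ℝ) * (Real.pi / 3) = i * (Real.pi / 3) + Real.pi := by push_cast; ring
  rw [hexCorner, this, Real.cos_add_pi, Real.sin_add_pi]
  rfl

lemma hexCorner_zero : hexCorner 0 = emb (1, 0) := by
  simp [hexCorner, emb]

lemma hexCorner_one : hexCorner 1 = emb (1, 1) := by
  ext <;> simp [hexCorner, emb]
  norm_num

lemma hexCorner_two : hexCorner 2 = emb (0, 1) := by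
  ext <;> simp [hexCorner, emb, cos_two, sin_two]
  norm_num

lemma hexCorner_three : hexCorner 3 = emb (-1, 0) := by
  rw [hexCorner_add_three 0, hexCorner_zero]; ext <;> simp [emb]

lemma hexCorner_four : hexCorner 4 = emb (-1, -1) := by
  rw [hexCorner_add_three 1, hexCorner_one]; ext <;> simp [emb]; ring

lemma hexCorner_five : hexCorner 5 = emb (0, -1) := by
  rw [hexCorner_add_three 2, hexCorner_two]; ext <;> simp [emb]; norm_num

lemma hexCorner_six : hexCorner 6 = emb (1, 0) := by
  rw [hexCorner_add_three 3, hexCorner_add_three 0, hexCorner_zero, neg_neg]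

lemma emb_mem_hexSide_two (p : Pt) :
    emb p ∈ hexSide 2 ↔ p.2 - p.1 = 1 ∧ 0 ≤ p.2 ∧ p.2 ≤ 1 := by
  rw [hexSide, hexCorner_two, hexCorner_three]
  constructor
  · rintro ⟨a, b, ha, hb, hab, h⟩
    rw [← emb_combo] at h
    have := emb_injective h
    rw [← this]
    simp only [Prod.fst_add, Prod.snd_add, Prod.smul_fst, Prod.smul_snd, smul_eq_mul]
    refine ⟨?_, ?_, ?_⟩ <;> linarith
  · rintro ⟨h, h0, h1⟩
    refine ⟨p.2, 1 - p.2, h0, by linarith, by ring, ?_⟩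
    rw [← emb_combo]
    congr 1
    ext <;> simp
    linarith

lemma emb_mem_hexSide_five (p : Pt) :
    emb p ∈ hexSide 5 ↔ p.1 - p.2 = 1 ∧ 0 ≤ p.1 ∧ p.1 ≤ 1 := by
  rw [hexSide, hexCorner_five, hexCorner_six]
  constructor
  · rintro ⟨a, b, ha, hb, hab, h⟩
    rw [← emb_combo] at h
    have := emb_injective h
    rw [← this]
    simp only [Prod.fst_add, Prod.snd_add, Prod.smul_fst, Prod.smul_snd, smul_eq_mul]
    refine ⟨?_, ?_, ?_⟩ <;> linarith
  · rintro ⟨h, h0, h1⟩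
    refine ⟨1 - p.1, p.1, by linarith, h0, by ring, ?_⟩
    rw [← emb_combo]
    congr 1
    ext <;> simp
    linarith

/-- The same triangle, up to the order of the first two vertices. The triangles of `TriSet 1` list
the corners of the hexagon cyclically, those of `TL 0` list the even corner first. -/
def SameTri (s t : Tri) : Prop := s = t ∨ s = (t.2.1, t.1, t.2.2)

lemma children_congr {s t : Tri} (h : SameTri s t) : children s = children t := by
  rcases h with rfl | rfl
  · rfl
  · have e1 : mpt t.2.1 t.1 = mpt t.1 t.2.1 := by rw [mpt, mpt, add_comm]
    have e2 : bary t.2.1 t.1 t.2.2 = bary t.1 t.2.1 t.2.2 := by rw [bary, bary, add_comm t.2.1]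
    ext c
    simp only [children, e1, e2, Set.mem_insert_iff, Set.mem_singleton_iff]
    tauto

lemma mem_children_emb {t c : Tri} :
    c ∈ children (mapT emb t) ↔ ∃ c' ∈ childL t, mapT emb c' = c := by
  rw [← mem_childL, childL_mapT isAff_emb, List.mem_map]

/-- `TL n` describes the triangles of `T_{n+1}`. -/
lemma triSet_TL (n : ℕ) :
    (∀ s ∈ TriSet (n + 1), ∃ t ∈ TL n, SameTri s (mapT emb t)) ∧
      ∀ t ∈ TL n, ∃ s ∈ TriSet (n + 1), SameTri s (mapT emb t) := by
  induction n with
  | zero =>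
    have h0 : emb (0, 0) = (0, 0) := by simp [emb]
    constructor
    · rintro s ⟨i, rfl⟩
      fin_cases i
      · exact ⟨((1, 0), (1, 1), (0, 0)), by simp [TL],
          Or.inl (by simp [mapT, h0, hexCorner_zero, hexCorner_one])⟩
      · exact ⟨((0, 1), (1, 1), (0, 0)), by simp [TL],
          Or.inr (by simp [mapT, h0, hexCorner_two, hexCorner_one])⟩
      · exact ⟨((0, 1), (-1, 0), (0, 0)), by simp [TL],
          Or.inl (by simp [mapT, h0, hexCorner_two, hexCorner_three])⟩
      · exact ⟨((-1, -1), (-1, 0), (0, 0)), by simp [TL],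
          Or.inr (by simp [mapT, h0, hexCorner_three, hexCorner_four])⟩
      · exact ⟨((-1, -1), (0, -1), (0, 0)), by simp [TL],
          Or.inl (by simp [mapT, h0, hexCorner_five, hexCorner_four])⟩
      · exact ⟨((1, 0), (0, -1), (0, 0)), by simp [TL],
          Or.inr (by simp [mapT, h0, hexCorner_five, hexCorner_six])⟩
    · intro t ht
      simp only [TL, List.mem_cons, List.not_mem_nil, or_false] at ht
      rcases ht with rfl | rfl | rfl | rfl | rfl | rfl
      · exact ⟨_, ⟨0, rfl⟩, Or.inl (by simp [mapT, h0, hexCorner_zero, hexCorner_one])⟩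
      · exact ⟨_, ⟨1, rfl⟩, Or.inr (by simp [mapT, h0, hexCorner_two, hexCorner_one])⟩
      · exact ⟨_, ⟨2, rfl⟩, Or.inl (by simp [mapT, h0, hexCorner_two, hexCorner_three])⟩
      · exact ⟨_, ⟨3, rfl⟩, Or.inr (by simp [mapT, h0, hexCorner_three, hexCorner_four])⟩
      · exact ⟨_, ⟨4, rfl⟩, Or.inl (by simp [mapT, h0, hexCorner_five, hexCorner_four])⟩
      · exact ⟨_, ⟨5, rfl⟩, Or.inr (by simp [mapT, h0, hexCorner_five, hexCorner_six])⟩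
  | succ n ih =>
    constructor
    · intro c hc
      obtain ⟨s, hs, hc⟩ := Set.mem_iUnion₂.1 hc
      obtain ⟨t, ht, hst⟩ := ih.1 s hs
      rw [children_congr hst, mem_children_emb] at hc
      obtain ⟨c', hc', rfl⟩ := hc
      exact ⟨c', List.mem_flatMap.2 ⟨t, ht, hc'⟩, Or.inl rfl⟩
    · intro c hc
      obtain ⟨t, ht, hc⟩ := List.mem_flatMap.1 hc
      obtain ⟨s, hs, hst⟩ := ih.2 t ht
      refine ⟨mapT emb c, Set.mem_iUnion₂.2 ⟨s, hs, ?_⟩, Or.inl rfl⟩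
      rw [children_congr hst, mem_children_emb]
      exact ⟨c, hc, rfl⟩

lemma mem_simp0 (n : ℕ) (p : Pt) :
    p ∈ Simp0 (n + 1) ↔ ∃ t ∈ TL n, p = emb t.1 ∨ p = emb t.2.1 ∨ p = emb t.2.2 := by
  constructor
  · rintro ⟨s, hs, h⟩
    obtain ⟨t, ht, rfl | rfl⟩ := (triSet_TL n).1 s hs <;> refine ⟨t, ht, ?_⟩ <;>
      simp only [mapT] at h <;> tauto
  · rintro ⟨t, ht, h⟩
    obtain ⟨s, hs, rfl | rfl⟩ := (triSet_TL n).2 t ht <;> refine ⟨_, hs, ?_⟩ <;>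
      simp only [mapT] <;> tauto

lemma mem_simp1 (n : ℕ) (e : Set Pt) :
    e ∈ Simp1 (n + 1) ↔ ∃ t ∈ TL n, e = {emb t.1, emb t.2.1} ∨ e = {emb t.2.1, emb t.2.2} ∨
      e = {emb t.2.2, emb t.1} := by
  constructor
  · rintro ⟨s, hs, h⟩
    obtain ⟨t, ht, rfl | rfl⟩ := (triSet_TL n).1 s hs <;> refine ⟨t, ht, ?_⟩ <;>
      simp only [mapT] at h
    · rw [Set.pair_comm (emb t.2.2)]; tauto
    · rw [Set.pair_comm (emb t.2.2), Set.pair_comm (emb t.1) (emb t.2.1)]; tauto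
  · rintro ⟨t, ht, h⟩
    obtain ⟨s, hs, rfl | rfl⟩ := (triSet_TL n).2 t ht <;> refine ⟨_, hs, ?_⟩ <;>
      simp only [mapT]
    · rw [Set.pair_comm (emb t.2.2)] at h; tauto
    · rw [Set.pair_comm (emb t.2.2), Set.pair_comm (emb t.1) (emb t.2.1)] at h; tauto

lemma energy_eq {V : Type} {c : V → V → ℝ} {U : Finset (V × V)}
    (hU : ∀ p q, (p, q) ∉ U → c p q = 0) (f : V → ℝ) :
    energy c f = (1 / 2) * ∑ e ∈ U, c e.1 e.2 * (f e.1 - f e.2) ^ 2 := by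
  classical
  have h0 : ∀ p q, p ∉ U.image Prod.fst ∨ q ∉ U.image Prod.snd → c p q * (f p - f q) ^ 2 = 0 := by
    intro p q h
    rw [hU p q, zero_mul]
    rintro hpq
    exact h.elim (fun h => h (Finset.mem_image.2 ⟨_, hpq, rfl⟩))
      (fun h => h (Finset.mem_image.2 ⟨_, hpq, rfl⟩))
  have h1 : ∀ p, ∑' q, c p q * (f p - f q) ^ 2 =
      ∑ q ∈ U.image Prod.snd, c p q * (f p - f q) ^ 2 :=
    fun p => tsum_eq_sum fun q hq => h0 p q (Or.inr hq)
  have h2 : ∑' p, ∑' q, c p q * (f p - f q) ^ 2 =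
      ∑ p ∈ U.image Prod.fst, ∑ q ∈ U.image Prod.snd, c p q * (f p - f q) ^ 2 := by
    simp only [h1]
    exact tsum_eq_sum fun p hp => Finset.sum_eq_zero fun q _ => h0 p q (Or.inl hp)
  rw [energy, h2, ← Finset.sum_product']
  congr 1
  symm
  refine Finset.sum_subset (fun e he => ?_) fun e _ he => by rw [hU e.1 e.2 he, zero_mul]
  exact Finset.mem_product.2 ⟨Finset.mem_image_of_mem _ he, Finset.mem_image_of_mem _ he⟩

open Classical in
/-- The oriented edges, in the plane of the regular hexagon, from the first to the second vertex of
the triangles of `l`. -/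
def edgeF (l : List Tri) : Finset (Pt × Pt) := l.toFinset.image fun t => (emb t.1, emb t.2.1)

lemma mem_edgeF {l : List Tri} {p q : Pt} :
    (p, q) ∈ edgeF l ↔ ∃ t ∈ l, p = emb t.1 ∧ q = emb t.2.1 := by
  simp only [edgeF, Finset.mem_image, List.mem_toFinset, Prod.mk.injEq]
  exact exists_congr fun t => and_congr_right fun _ => and_congr eq_comm eq_comm

/-- The sum of `(f p - f q) ^ 2` over the triangles of `l`, where `p` and `q` are the first two
vertices; an edge shared by two triangles counts twice. -/
def firstE (l : List Tri) (f : Pt → ℝ) : ℝ := (l.map fun t => (f t.1 - f t.2.1) ^ 2).sum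

lemma firstE_bounds {l : List Tri} (hl : Good l) (ha : ∀ t ∈ l, area t ≠ 0) (hn : l.Nodup)
    (f : Pt → ℝ) :
    ∑ e ∈ edgeF l, (f e.1 - f e.2) ^ 2 ≤ firstE l (f ∘ emb) ∧
      firstE l (f ∘ emb) ≤ 2 * ∑ e ∈ edgeF l, (f e.1 - f e.2) ^ 2 := by
  classical
  have h1 : firstE l (f ∘ emb) = ∑ t ∈ l.toFinset, (f (emb t.1) - f (emb t.2.1)) ^ 2 := by
    rw [List.sum_toFinset _ hn]; rfl
  rw [h1]
  constructor
  · have := sum_image_le l.toFinset (fun t : Tri => (emb t.1, emb t.2.1))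
      (fun e => (f e.1 - f e.2) ^ 2) (fun e => sq_nonneg _)
    convert this
    ext e
    simp only [edgeF, Finset.mem_image]
  · have h2 := hl.sum_edge_le ha (fun e => (f (emb e.1) - f (emb e.2)) ^ 2) (fun e => sq_nonneg _)
    have h3 : edgeF l = (l.toFinset.image fun t => (t.1, t.2.1)).image (Prod.map emb emb) := by
      rw [Finset.image_image, edgeF]
      ext e
      simp
    rw [h3, Finset.sum_image (fun x _ y _ h => emb_injective.prodMap emb_injective h)]
    convert h2 <;> rfl

/-- All oriented edges of the graph of level `n + 1`. -/
def allEdges (n : ℕ) : Finset (Pt × Pt) :=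
  open Classical in
  edgeF (TL n) ∪ edgeF ((TL n).map rotT) ∪ edgeF (((TL n).map rotT).map rotT) ∪
    (edgeF (TL n) ∪ edgeF ((TL n).map rotT) ∪ edgeF (((TL n).map rotT).map rotT)).image Prod.swap

lemma mem_allEdges (n : ℕ) (p q : Pt) :
    (p, q) ∈ allEdges n ↔ ({p, q} : Set Pt) ∈ Simp1 (n + 1) := by
  classical
  have hs : ∀ s : Finset (Pt × Pt), (p, q) ∈ s.image Prod.swap ↔ (q, p) ∈ s := by
    intro s
    rw [Finset.mem_image]
    constructor
    · rintro ⟨⟨a, b⟩, h, he⟩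
      rw [Prod.swap_prod_mk, Prod.mk.injEq] at he
      rwa [← he.1, ← he.2]
    · exact fun h => ⟨(q, p), h, rfl⟩
  have h : ∀ p q, (p, q) ∈ edgeF (TL n) ∪ edgeF ((TL n).map rotT) ∪
      edgeF (((TL n).map rotT).map rotT) ↔ ∃ t ∈ TL n, (p = emb t.1 ∧ q = emb t.2.1) ∨
        (p = emb t.2.1 ∧ q = emb t.2.2) ∨ (p = emb t.2.2 ∧ q = emb t.1) := by
    intro p q
    simp only [Finset.mem_union, mem_edgeF, List.mem_map, exists_exists_and_eq_and, rotT]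
    rw [or_assoc, ← exists_or, ← exists_or]
    refine exists_congr fun t => ?_
    tauto
  rw [mem_simp1]
  simp only [Set.pair_eq_pair_iff]
  rw [allEdges, Finset.mem_union]
  have h1 : (p, q) ∈ edgeF (TL n) ∪ edgeF ((TL n).map rotT) ∪
      edgeF (((TL n).map rotT).map rotT) ↔ _ := h p q
  have h2 : (p, q) ∈ (edgeF (TL n) ∪ edgeF ((TL n).map rotT) ∪
      edgeF (((TL n).map rotT).map rotT)).image Prod.swap ↔ _ := (hs _).trans (h q p)
  constructor
  · rintro (h3 | h3)
    · obtain ⟨t, ht, h4 | h4 | h4⟩ := h1.1 (by convert h3)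
      · exact ⟨t, ht, Or.inl (Or.inl h4)⟩
      · exact ⟨t, ht, Or.inr (Or.inl (Or.inl h4))⟩
      · exact ⟨t, ht, Or.inr (Or.inr (Or.inl h4))⟩
    · obtain ⟨t, ht, h4 | h4 | h4⟩ := h2.1 (by convert h3)
      · exact ⟨t, ht, Or.inl (Or.inr h4.symm)⟩
      · exact ⟨t, ht, Or.inr (Or.inl (Or.inr h4.symm))⟩
      · exact ⟨t, ht, Or.inr (Or.inr (Or.inr h4.symm))⟩
  · rintro ⟨t, ht, (h4 | h4) | (h4 | h4) | (h4 | h4)⟩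
    · left; convert h1.2 ⟨t, ht, Or.inl h4⟩
    · right; convert h2.2 ⟨t, ht, Or.inl h4.symm⟩
    · left; convert h1.2 ⟨t, ht, Or.inr (Or.inl h4)⟩
    · right; convert h2.2 ⟨t, ht, Or.inr (Or.inl h4.symm)⟩
    · left; convert h1.2 ⟨t, ht, Or.inr (Or.inr h4)⟩
    · right; convert h2.2 ⟨t, ht, Or.inr (Or.inr h4.symm)⟩

lemma cT_le (n : ℕ) (p q : Pt) : cT n p q ≤ 2 := by
  unfold cT; split_ifs <;> norm_num

lemma one_le_cT {n : ℕ} {p q : Pt} (hne : p ≠ q) (h : ({p, q} : Set Pt) ∈ Simp1 n) :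
    1 ≤ cT n p q := by
  rw [cT, if_pos ⟨hne, h⟩]; split_ifs <;> norm_num

lemma cT_nonneg (n : ℕ) (p q : Pt) : 0 ≤ cT n p q := by
  unfold cT; split_ifs <;> norm_num

lemma hexE_eq_firstE (n : ℕ) (f : Pt → ℝ) :
    hexE n f = firstE (TL n) f + firstE ((TL n).map rotT) f +
      firstE (((TL n).map rotT).map rotT) f := by
  simp only [firstE, hexE, List.map_map]
  rw [← List.sum_map_add, ← List.sum_map_add]
  congr 1
  refine List.map_congr_left fun t _ => ?_
  simp only [triE, Function.comp, rotT]
  ring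

/-- The energy of the graph is comparable with the sum of the triangle energies. -/
lemma energy_bounds (n : ℕ) (f : Pt → ℝ) :
    energy (cT (n + 1)) f ≤ 2 * hexE n (f ∘ emb) ∧
      hexE n (f ∘ emb) ≤ 12 * energy (cT (n + 1)) f := by
  classical
  have hE := energy_eq (c := cT (n + 1)) (U := allEdges n) (fun p q h => by
    rw [cT, if_neg fun h' => h ((mem_allEdges n p q).2 h'.2)]) f
  have hrot : ∀ l : List Tri, (∀ t ∈ l, area t ≠ 0) → ∀ t ∈ l.map rotT, area t ≠ 0 := by
    intro l h t ht
    obtain ⟨s, hs, rfl⟩ := List.mem_map.1 ht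
    rw [area_rotT]; exact h s hs
  have hinj : Function.Injective rotT := by
    rintro ⟨a, b, c⟩ ⟨a', b', c'⟩ h
    simp only [rotT, Prod.mk.injEq] at h
    rw [h.1, h.2.1, h.2.2]
  have g0 := good_TL n
  have a0 := area_ne n
  have n0 := nodup_TL n
  have b0 := firstE_bounds g0 a0 n0 f
  have b1 := firstE_bounds g0.map_rotT (hrot _ a0) (n0.map hinj) f
  have b2 := firstE_bounds g0.map_rotT.map_rotT (hrot _ (hrot _ a0)) ((n0.map hinj).map hinj) f
  obtain ⟨S, hS⟩ : ∃ S, S = ∑ e ∈ allEdges n, (f e.1 - f e.2) ^ 2 := ⟨_, rfl⟩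
  have hφ : ∀ e : Pt × Pt, 0 ≤ (f e.1 - f e.2) ^ 2 := fun e => sq_nonneg _
  have hup : energy (cT (n + 1)) f ≤ S := by
    rw [hE, hS, Finset.mul_sum]
    refine Finset.sum_le_sum fun e _ => ?_
    nlinarith [cT_le (n + 1) e.1 e.2, hφ e]
  have hlo : S ≤ 2 * energy (cT (n + 1)) f := by
    rw [hE, hS, ← mul_assoc, mul_one_div_cancel two_ne_zero, one_mul]
    refine Finset.sum_le_sum fun e he => ?_
    by_cases h : e.1 = e.2
    · rw [h, sub_self]; simp
    · exact le_mul_of_one_le_left (hφ e) (one_le_cT h ((mem_allEdges n e.1 e.2).1 he))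
  have hsub : ∀ s : Finset (Pt × Pt), s ⊆ allEdges n → ∑ e ∈ s, (f e.1 - f e.2) ^ 2 ≤ S :=
    fun s h => hS ▸ Finset.sum_le_sum_of_subset_of_nonneg h fun e _ _ => hφ e
  have hun : ∀ s t : Finset (Pt × Pt), ∑ e ∈ s ∪ t, (f e.1 - f e.2) ^ 2 ≤
      ∑ e ∈ s, (f e.1 - f e.2) ^ 2 + ∑ e ∈ t, (f e.1 - f e.2) ^ 2 := by
    intro s t
    rw [← Finset.sum_union_inter]
    exact le_add_of_nonneg_right (Finset.sum_nonneg fun e _ => hφ e)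
  have hsw : ∀ s : Finset (Pt × Pt), ∑ e ∈ s.image Prod.swap, (f e.1 - f e.2) ^ 2 =
      ∑ e ∈ s, (f e.1 - f e.2) ^ 2 := by
    intro s
    rw [Finset.sum_image fun x _ y _ h => Prod.swap_injective h]
    refine Finset.sum_congr rfl fun e _ => ?_
    simp only [Prod.fst_swap, Prod.snd_swap]; ring
  rw [hexE_eq_firstE]
  constructor
  · refine hup.trans ?_
    obtain ⟨W, hW⟩ : ∃ W, W = edgeF (TL n) ∪ edgeF ((TL n).map rotT) ∪
      edgeF (((TL n).map rotT).map rotT) := ⟨_, rfl⟩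
    have hA : allEdges n = W ∪ W.image Prod.swap := by
      rw [hW, allEdges]
    have hW' : ∑ e ∈ W, (f e.1 - f e.2) ^ 2 ≤ ∑ e ∈ edgeF (TL n), (f e.1 - f e.2) ^ 2 +
        ∑ e ∈ edgeF ((TL n).map rotT), (f e.1 - f e.2) ^ 2 +
        ∑ e ∈ edgeF (((TL n).map rotT).map rotT), (f e.1 - f e.2) ^ 2 := by
      rw [hW]
      exact (hun _ _).trans (add_le_add_left (hun _ _) _)
    have h1 := hun W (W.image Prod.swap)
    rw [hsw, ← hA, ← hS] at h1
    linarith [b0.1, b1.1, b2.1]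
  · have s0 := hsub (edgeF (TL n)) fun e he => by
      rw [allEdges]; simp only [Finset.mem_union]; tauto
    have s1 := hsub (edgeF ((TL n).map rotT)) fun e he => by
      rw [allEdges]; simp only [Finset.mem_union]; tauto
    have s2 := hsub (edgeF (((TL n).map rotT).map rotT)) fun e he => by
      rw [allEdges]; simp only [Finset.mem_union]; tauto
    linarith [b0.2, b1.2, b2.2]

/-! ### Conductances and their growth rate -/

/-- The effective conductance between the sides `L_2` and `L_5`. -/
def cond (n : ℕ) : ℝ :=
  sInf {e : ℝ | ∃ f : Pt → ℝ, (∀ p ∈ LsetT n 2, f p = 0) ∧ (∀ p ∈ LsetT n 5, f p = 1) ∧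
    e = energy (cT n) f}

lemma RT_eq (n : ℕ) : RT n = (cond n)⁻¹ := rfl

lemma cond_le {g : Pt → ℝ} (hg : Adm g) (n : ℕ) : cond (n + 1) ≤ 2 * hexE n g := by
  have e : (g ∘ embInv) ∘ emb = g := by
    funext p; simp only [Function.comp, embInv_emb]
  have hv : ∀ p ∈ Simp0 (n + 1), ∃ v, emb v = p := by
    intro p hp
    obtain ⟨t, -, h | h | h⟩ := (mem_simp0 n p).1 hp <;> exact ⟨_, h.symm⟩
  refine le_trans (csInf_le ⟨0, ?_⟩ ⟨g ∘ embInv, ?_, ?_, rfl⟩) ?_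
  · rintro _ ⟨f, -, -, rfl⟩
    linarith [(energy_bounds n f).2, hexE_nonneg n (f ∘ emb)]
  · rintro p ⟨hp, hs⟩
    obtain ⟨v, rfl⟩ := hv p hp
    obtain ⟨h1, h2, h3⟩ := (emb_mem_hexSide_two v).1 hs
    rw [Function.comp, embInv_emb]
    exact hg.1 v h1 h2 h3
  · rintro p ⟨hp, hs⟩
    obtain ⟨v, rfl⟩ := hv p hp
    obtain ⟨h1, h2, h3⟩ := (emb_mem_hexSide_five v).1 hs
    rw [Function.comp, embInv_emb]
    exact hg.2 v h1 h2 h3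
  · have := (energy_bounds n (g ∘ embInv)).1
    rwa [e] at this

lemma le_cond {n : ℕ} {B : ℝ} (hB : ∀ g, Adm g → B ≤ hexE n g) : B / 12 ≤ cond (n + 1) := by
  classical
  have hv : ∀ t ∈ TL n, ∀ v, v = t.1 ∨ v = t.2.1 ∨ v = t.2.2 → emb v ∈ Simp0 (n + 1) := by
    rintro t ht v h
    exact (mem_simp0 n _).2 ⟨t, ht, by rcases h with rfl | rfl | rfl <;> simp⟩
  refine le_csInf ⟨_, fun p => if p ∈ LsetT (n + 1) 2 then 0 else 1, fun p hp => if_pos hp,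
    fun p hp => if_neg fun hp' => ?_, rfl⟩ ?_
  · obtain ⟨t, -, h⟩ := (mem_simp0 n p).1 hp.1
    obtain ⟨v, rfl⟩ : ∃ v, p = emb v := by rcases h with h | h | h <;> exact ⟨_, h⟩
    linarith [((emb_mem_hexSide_two v).1 hp'.2).1, ((emb_mem_hexSide_five v).1 hp.2).1]
  · rintro _ ⟨f, h0, h1, rfl⟩
    -- Off the vertices, the boundary values are imposed on the whole sides.
    let g : Pt → ℝ := fun p => if p.2 - p.1 = 1 ∧ 0 ≤ p.2 ∧ p.2 ≤ 1 then 0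
      else if p.1 - p.2 = 1 ∧ 0 ≤ p.1 ∧ p.1 ≤ 1 then 1 else f (emb p)
    have hg : Adm g := by
      constructor
      · intro p h1 h2 h3
        exact if_pos ⟨h1, h2, h3⟩
      · intro p h1 h2 h3
        exact (if_neg fun h => by linarith [h.1]).trans (if_pos ⟨h1, h2, h3⟩)
    have hgf : ∀ t ∈ TL n, ∀ v, v = t.1 ∨ v = t.2.1 ∨ v = t.2.2 → g v = f (emb v) := by
      intro t ht v h
      simp only [g]
      split_ifs with H1 H2
      · exact (h0 _ ⟨hv t ht v h, (emb_mem_hexSide_two v).2 H1⟩).symm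
      · exact (h1 _ ⟨hv t ht v h, (emb_mem_hexSide_five v).2 H2⟩).symm
      · rfl
    have e : hexE n g = hexE n (f ∘ emb) := by
      rw [hexE, hexE]
      congr 1
      refine List.map_congr_left fun t ht => ?_
      simp only [triE, Function.comp]
      rw [hgf t ht _ (Or.inl rfl), hgf t ht _ (Or.inr (Or.inl rfl)),
        hgf t ht _ (Or.inr (Or.inr rfl))]
    linarith [hB g hg, (energy_bounds n f).2]

lemma cond_upper (n : ℕ) : cond (n + 1) ≤ 18 * (4 / 3) ^ n := by
  linarith [cond_le adm_linU n, hexE_linU n]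

lemma cond_lower (n : ℕ) : 1 / 24 * (5 / 4) ^ n ≤ cond (n + 1) := by
  linarith [le_cond (n := n) fun g hg => hexE_ge hg n]

lemma cond_pos (n : ℕ) : 0 < cond (n + 1) := lt_of_lt_of_le (by positivity) (cond_lower n)

/-- Submultiplicativity of the conductance up to a constant. The factor is
`92160 = 2 * 320 * 12 * 12`: one comparison of energies for the composed potential, one for each of
the two factors, and the constant of `hexE_interp_le`. -/
lemma cond_submul (m n : ℕ) :
    cond (m + 1 + (n + 1)) ≤ 92160 * (cond (m + 1) * cond (n + 1)) := by
  have hpos := cond_pos n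
  have h1 : ∀ g, Adm g → ∀ h, Adm h →
      cond (m + 1 + (n + 1)) ≤ 640 * hexE m g * hexE n h := by
    intro g hg h hh
    have := cond_le (interp_adm m g h) (m + (n + 1))
    rw [show m + (n + 1) + 1 = m + 1 + (n + 1) by ring] at this
    linarith [hexE_interp_le hg hh m n]
  have h2 : ∀ g, Adm g → cond (m + 1 + (n + 1)) ≤ 7680 * hexE m g * cond (n + 1) := by
    intro g hg
    have hp : 0 < hexE m g := lt_of_lt_of_le (by positivity) (hexE_ge hg m)
    have := le_cond (n := n) (B := cond (m + 1 + (n + 1)) / (640 * hexE m g)) fun h hh => by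
      rw [div_le_iff₀ (by positivity)]
      linarith [h1 g hg h hh]
    rw [div_div, div_le_iff₀ (by positivity)] at this
    linarith
  have := le_cond (n := m) (B := cond (m + 1 + (n + 1)) / (7680 * cond (n + 1))) fun g hg => by
    rw [div_le_iff₀ (by positivity)]
    linarith [h2 g hg]
  rw [div_div, div_le_iff₀ (by positivity)] at this
  linarith

/-- The logarithm of `92160 * cond n`. The constant makes the sequence subadditive. The value at
`0`, where no graph is defined, is set to `0`. -/
def logCond (n : ℕ) : ℝ := if n = 0 then 0 else Real.log (92160 * cond n)

lemma logCond_succ (n : ℕ) : logCond (n + 1) = Real.log 92160 + Real.log (cond (n + 1)) := by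
  rw [logCond, if_neg n.succ_ne_zero, Real.log_mul (by norm_num) (cond_pos n).ne']

lemma subadditive_logCond : Subadditive logCond := by
  intro m n
  rcases m with _ | m
  · simp [logCond]
  rcases n with _ | n
  · simp [logCond]
  have h := cond_pos (m + 1 + n)
  have e : m + 1 + (n + 1) = m + 1 + n + 1 := rfl
  rw [logCond_succ, logCond_succ, e, logCond_succ, ← e]
  have h1 := Real.log_le_log (by rw [e]; exact h) (cond_submul m n)
  rw [Real.log_mul (by norm_num) (mul_pos (cond_pos m) (cond_pos n)).ne',
    Real.log_mul (cond_pos m).ne' (cond_pos n).ne'] at h1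
  linarith

lemma logCond_nonneg (n : ℕ) : 0 ≤ logCond n := by
  rcases n with _ | n
  · simp [logCond]
  · rw [logCond, if_neg n.succ_ne_zero]
    refine Real.log_nonneg ?_
    linarith [cond_lower n, one_le_pow₀ (n := n) (by norm_num : (1 : ℝ) ≤ 5 / 4)]

/-- Fekete's lemma for `logCond`; the constant `log 92160` disappears in the limit. -/
lemma exists_tendsto : ∃ l : ℝ,
    Filter.Tendsto (fun n : ℕ => Real.log (cond n) / n) Filter.atTop (nhds l) := by
  have h := subadditive_logCond.tendsto_lim
    ⟨0, by rintro _ ⟨n, rfl⟩; exact div_nonneg (logCond_nonneg n) n.cast_nonneg⟩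
  refine ⟨_, (h.sub (tendsto_const_div_atTop_nhds_zero_nat (Real.log 92160))).congr' ?_⟩
  filter_upwards [Filter.eventually_gt_atTop 0] with n hn
  obtain ⟨n, rfl⟩ := Nat.exists_eq_succ_of_ne_zero hn.ne'
  rw [Nat.succ_eq_add_one, logCond_succ]
  ring

lemma limit_le {a : ℕ → ℝ} {l c d : ℝ}
    (h : Filter.Tendsto (fun n : ℕ => a n / n) Filter.atTop (nhds l))
    (ha : ∀ n : ℕ, a (n + 1) ≤ c + (n + 1) * d) : l ≤ d := by
  have h2 := (tendsto_const_div_atTop_nhds_zero_nat c).add_const d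
  rw [zero_add] at h2
  refine le_of_tendsto_of_tendsto h h2 ?_
  filter_upwards [Filter.eventually_gt_atTop 0] with n hn
  obtain ⟨n, rfl⟩ := Nat.exists_eq_succ_of_ne_zero hn.ne'
  have hp : (0 : ℝ) < ((n.succ : ℕ) : ℝ) := by exact_mod_cast hn
  rw [div_add' _ _ _ hp.ne']
  refine div_le_div_of_nonneg_right ((ha n).trans_eq ?_) hp.le
  push_cast
  ring

/-- The 1-skeleton resistance scaling factor `ρ^T`, defined by
`log ρ^T = lim (1/n) log R_n^T`, satisfies `2/3 ≤ ρ^T ≤ 4/5`. -/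
theorem rhoT_bounds :
    ∃ ρT : ℝ, 0 < ρT ∧
      Filter.Tendsto (fun n : ℕ => Real.log (RT n) / n) Filter.atTop (nhds (Real.log ρT)) ∧
      2 / 3 ≤ ρT ∧ ρT ≤ 4 / 5 := by
  obtain ⟨l, hl⟩ := exists_tendsto
  have hl' : Filter.Tendsto (fun n : ℕ => -Real.log (cond n) / n) Filter.atTop (nhds (-l)) := by
    simpa only [neg_div] using hl.neg
  have hup : l ≤ Real.log (4 / 3) := by
    refine limit_le (c := Real.log 18) hl fun n => ?_
    have h := Real.log_le_log (cond_pos n) (cond_upper n)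
    rw [Real.log_mul (by norm_num) (by positivity), Real.log_pow] at h
    linarith [Real.log_nonneg (by norm_num : (1 : ℝ) ≤ 4 / 3)]
  have hlo : -l ≤ Real.log (4 / 5) := by
    refine limit_le (c := -Real.log (1 / 24) - Real.log (4 / 5)) hl' fun n => ?_
    have h := Real.log_le_log (by positivity) (cond_lower n)
    rw [Real.log_mul (by norm_num) (by positivity), Real.log_pow] at h
    have e : Real.log (4 / 5) = -Real.log (5 / 4) := by rw [← Real.log_inv]; norm_num
    rw [e]
    linarith
  refine ⟨Real.exp (-l), Real.exp_pos _, ?_, ?_, ?_⟩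
  · rw [Real.log_exp]
    simpa only [RT_eq, Real.log_inv] using hl'
  · -- The argument gives the lower bound `3 / 4`.
    have h : Real.exp (-Real.log (4 / 3)) ≤ Real.exp (-l) := Real.exp_le_exp.2 (by linarith)
    rw [Real.exp_neg, Real.exp_log (by norm_num)] at h
    linarith [h, (by norm_num : (2 : ℝ) / 3 ≤ (4 / 3)⁻¹)]
  · have h := Real.exp_le_exp.2 hlo
    rwa [Real.exp_log (by norm_num)] at h

end BarycentricHexacarpet
end
end

section
/- Let G = (V, c) be a finite weighted graph and let σ : V → V be a bijection preserving the conductances, i.e. c(σp, σq) = c(p, q) for all p, q. If u, v, w : V → ℝ satisfy u ∘ σ = u and w = v ∘ σ, then the bilinear energy satisfies E(u, v − w) = 0. (This is the content of the Lemma in Section 3.2 of the paper, where σ is the reflection of G_{n-1}^T fixing p_0 and exchanging p_0' with p_2, u = φ_n ∘ F_0 is symmetric and w = v ∘ σ with v = φ_n ∘ F_1, w = φ_n ∘ F_5 for the harmonic potential φ_n.) -/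
/-!
The double sum defining the energy is unchanged when both vertices are relabelled by the
conductance-preserving bijection `σ`, so `E(u, v) = E(u ∘ σ, v ∘ σ) = E(u, w)`. Bilinearity then
gives `E(u, v - w) = 0`.
-/

noncomputable section

/-- The bilinear graph energy `E(f,g) = (1/2) ∑_{p,q} c p q (f p - f q)(g p - g q)`
of a finite weighted graph with conductances `c`. -/
def energyBilin {V : Type} [Fintype V] (c : V → V → ℝ) (f g : V → ℝ) : ℝ :=
  (1 / 2) * ∑ p : V, ∑ q : V, c p q * (f p - f q) * (g p - g q)

/-- If `σ` is a bijection of a finite weighted graph preserving the conductances,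
`u` is `σ`-invariant and `w = v ∘ σ`, then `E(u, v - w) = 0`. -/
theorem energy_orthogonal_of_symmetry {V : Type} [Fintype V] (c : V → V → ℝ)
    (hsymm : ∀ p q, c p q = c q p) (hnonneg : ∀ p q, 0 ≤ c p q)
    (hdiag : ∀ p, c p p = 0)
    (σ : V ≃ V) (hσ : ∀ p q, c (σ p) (σ q) = c p q)
    (u v w : V → ℝ) (hu : ∀ p, u (σ p) = u p) (hw : ∀ p, w p = v (σ p)) :
    energyBilin c u (v - w) = 0 := by
  -- Reindexing both summation variables by `σ` turns the `v`-part of the energy into the `w`-part.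
  have key : ∑ p : V, ∑ q : V, c p q * (u p - u q) * (v p - v q)
      = ∑ p : V, ∑ q : V, c p q * (u p - u q) * (w p - w q) := by
    rw [← Equiv.sum_comp σ]
    refine Finset.sum_congr rfl fun p _ => ?_
    rw [← Equiv.sum_comp σ]
    refine Finset.sum_congr rfl fun q _ => ?_
    rw [hσ, hu, hu, hw, hw]
  have split : ∑ p : V, ∑ q : V, c p q * (u p - u q) * ((v - w) p - (v - w) q)
      = ∑ p : V, ∑ q : V, c p q * (u p - u q) * (v p - v q)
        - ∑ p : V, ∑ q : V, c p q * (u p - u q) * (w p - w q) := by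
    simp only [← Finset.sum_sub_distrib, Pi.sub_apply]
    refine Finset.sum_congr rfl fun p _ => Finset.sum_congr rfl fun q _ => ?_
    ring
  rw [energyBilin, split, key, sub_self, mul_zero]
end
end

section
/- Thompson's principle: let G = (V, c) be a finite connected weighted graph and A, B ⊆ V disjoint nonempty sets, and let φ be the unique function with φ ≡ 0 on A, φ ≡ 1 on B, and Δφ(p) = 0 for all p ∉ A ∪ B. Then I = R(A,B) · ∇φ is a unit flow from A to B, its energy dissipation satisfies E(I) = R(A,B), and I is the unique minimizer of the energy dissipation among all unit flows from A to B: for every unit flow J from A to B, E(J) ≥ E(I), with equality only for J = I. -/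
/-!
Summation by parts (`half_sum_mul_sub_eq_flux`) shows that every flow `J` from `A` to `B` satisfies
`(1/2) ∑ J p q (f p - f q) = flux A J` for every potential `f` equal to `0` on `A` and `1` on `B`.

* Applied to the flow `∇φ` and an arbitrary such `f`, it gives `E(f) = E(φ) + E(f - φ)`, so `φ`
  attains the infimum defining `R(A,B)` and `R(A,B) = E(φ)⁻¹` (`effRes_eq_inv_energy`), where
  `E(φ) > 0` by connectedness (`energy_pos`).  Applied to `∇φ` and `φ`, it shows that the flux of
  `∇φ` is `E(φ)`, so `I = R(A,B) ∇φ` has flux `1`.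
* The dissipation pairing of a unit flow `J` with `I` is `R(A,B)` times the flux of `J`
  (`dissip_smul_grad`), i.e. `R(A,B)`.  In particular `E(I) = R(A,B)`, and
  `E(J) = E(I) + E(J - I)`; positive definiteness of the dissipation gives both
  the inequality and the equality case.
-/

noncomputable section

namespace WeightedGraph

attribute [local instance] Classical.propDecidable

variable {V : Type}

/-- The energy `E(f) = (1/2) ∑_{p,q} c p q (f p - f q)^2` of a potential `f`
on a finite weighted graph with conductances `c`. -/
def energy [Fintype V] (c : V → V → ℝ) (f : V → ℝ) : ℝ :=
  (1 / 2) * ∑ p : V, ∑ q : V, c p q * (f p - f q) ^ 2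

/-- The effective resistance `R(A,B) = (inf {E(f) : f ≡ 0 on A, f ≡ 1 on B})⁻¹`. -/
def effRes [Fintype V] (c : V → V → ℝ) (A B : Set V) : ℝ :=
  (sInf {e : ℝ | ∃ f : V → ℝ, (∀ p ∈ A, f p = 0) ∧ (∀ p ∈ B, f p = 1) ∧ e = energy c f})⁻¹

/-- The discrete gradient `∇f (p,q) = c p q * (f p - f q)`. -/
def grad (c : V → V → ℝ) (f : V → ℝ) : V → V → ℝ := fun p q => c p q * (f p - f q)

/-- The weighted graph Laplacian `Δf (p) = -∑_q c p q (f p - f q)`. -/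
def lap [Fintype V] (c : V → V → ℝ) (f : V → ℝ) : V → ℝ :=
  fun p => -∑ q : V, c p q * (f p - f q)

/-- The energy-dissipation pairing
`E(J,K) = (1/2) ∑_{c p q > 0} J p q * K p q / c p q` of edge functions. -/
def dissip [Fintype V] (c : V → V → ℝ) (J K : V → V → ℝ) : ℝ :=
  (1 / 2) * ∑ p : V, ∑ q : V, if 0 < c p q then J p q * K p q / c p q else 0

/-- The divergence `div J (p) = -∑_q J p q` of an edge function. -/
def divg [Fintype V] (J : V → V → ℝ) : V → ℝ := fun p => -∑ q : V, J p q

/-- `J` is a flow from `A` to `B`: it is antisymmetric, vanishes off the edge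
set, and has vanishing divergence outside `A ∪ B`. -/
def IsFlow [Fintype V] (c : V → V → ℝ) (A B : Set V) (J : V → V → ℝ) : Prop :=
  (∀ p q, J p q = -J q p) ∧ (∀ p q, ¬ 0 < c p q → J p q = 0) ∧
    ∀ p, p ∉ A ∪ B → divg J p = 0

/-- The flux of an edge function out of a set `A`: `∑_{p ∈ A} div J (p)`. -/
def flux [Fintype V] (A : Set V) (J : V → V → ℝ) : ℝ :=
  ∑ p : V, if p ∈ A then divg J p else 0

/-- A unit flow from `A` to `B` is a flow of flux `1`. -/
def IsUnitFlow [Fintype V] (c : V → V → ℝ) (A B : Set V) (J : V → V → ℝ) : Prop :=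
  IsFlow c A B J ∧ flux A J = 1

/-- The graph is connected: any two vertices are joined by a path of edges. -/
def IsConnected (c : V → V → ℝ) : Prop :=
  ∀ p q : V, Relation.ReflTransGen (fun a b => 0 < c a b) p q


/-- Summation by parts against a flow: the total `J`-weighted drop of a potential with boundary
values `0` on `A` and `1` on `B` only depends on the flux of `J`.  It uses that the divergence of
an antisymmetric function sums to zero. -/
lemma half_sum_mul_sub_eq_flux [Fintype V] {c : V → V → ℝ} {A B : Set V}
    {J : V → V → ℝ} (hJ : IsFlow c A B J) {f : V → ℝ}
    (hfA : ∀ p ∈ A, f p = 0) (hfB : ∀ p ∈ B, f p = 1) :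
    (1 / 2) * ∑ p : V, ∑ q : V, J p q * (f p - f q) = flux A J := by
  obtain ⟨hanti, -, hdiv⟩ := hJ
  have htot : ∑ p : V, divg J p = 0 := by
    have h : ∑ p : V, ∑ q : V, J p q = -∑ p : V, ∑ q : V, J p q := by
      conv_lhs => rw [Finset.sum_comm]
      simp only [← Finset.sum_neg_distrib]
      exact Finset.sum_congr rfl fun p _ => Finset.sum_congr rfl fun q _ => hanti q p
    simp only [divg, Finset.sum_neg_distrib]
    linarith
  have h1 : ∑ p : V, ∑ q : V, J p q * f p = -∑ p : V, f p * divg J p := by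
    rw [← Finset.sum_neg_distrib]
    refine Finset.sum_congr rfl fun p _ => ?_
    rw [← Finset.sum_mul, divg]
    ring
  have h2 : ∑ p : V, ∑ q : V, J p q * f q = -∑ p : V, ∑ q : V, J p q * f p := by
    rw [Finset.sum_comm]
    simp only [← Finset.sum_neg_distrib]
    refine Finset.sum_congr rfl fun p _ => Finset.sum_congr rfl fun q _ => ?_
    rw [hanti q p]
    ring
  have h3 : flux A J = ∑ p : V, (divg J p - f p * divg J p) := by
    refine Finset.sum_congr rfl fun p _ => ?_
    by_cases hpA : p ∈ A
    · simp [hpA, hfA p hpA]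
    · by_cases hpB : p ∈ B
      · simp [hpA, hfB p hpB]
      · simp [hpA, hdiv p (by simp [hpA, hpB])]
  simp only [mul_sub, Finset.sum_sub_distrib] at h3 ⊢
  linarith

/-- Pairing a function supported on the edges with `∇f` cancels the conductances. -/
lemma dissip_smul_grad [Fintype V] {c : V → V → ℝ} {J : V → V → ℝ}
    (hJ : ∀ p q, ¬ 0 < c p q → J p q = 0) (r : ℝ) (f : V → ℝ) :
    dissip c J (fun p q => r * grad c f p q) =
      r * ((1 / 2) * ∑ p : V, ∑ q : V, J p q * (f p - f q)) := by
  simp only [dissip, Finset.mul_sum]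
  refine Finset.sum_congr rfl fun p _ => Finset.sum_congr rfl fun q _ => ?_
  by_cases h : 0 < c p q
  · rw [if_pos h, grad]
    field_simp
  · simp [h, hJ p q h]

lemma isFlow_smul_grad [Fintype V] {c : V → V → ℝ}
    (hsymm : ∀ p q, c p q = c q p) (hnonneg : ∀ p q, 0 ≤ c p q) {A B : Set V} {f : V → ℝ}
    (hharm : ∀ p, p ∉ A ∪ B → lap c f p = 0) (r : ℝ) :
    IsFlow c A B (fun p q => r * grad c f p q) := by
  refine ⟨fun p q => ?_, fun p q h => ?_, fun p hp => ?_⟩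
  · simp only [grad, hsymm p q]
    ring
  · simp [grad, le_antisymm (not_lt.mp h) (hnonneg p q)]
  · have h := hharm p hp
    rw [lap, neg_eq_zero] at h
    simp [divg, grad, ← Finset.mul_sum, h]

/-- A potential without energy is constant along edges, hence constant on a connected graph. -/
lemma energy_pos [Fintype V] {c : V → V → ℝ}
    (hnonneg : ∀ p q, 0 ≤ c p q) (hconn : IsConnected c) {f : V → ℝ} {a b : V}
    (hab : f a ≠ f b) : 0 < energy c f := by
  have hterm : ∀ p q, 0 ≤ c p q * (f p - f q) ^ 2 :=
    fun p q => mul_nonneg (hnonneg p q) (sq_nonneg _)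
  have hrow : ∀ p, 0 ≤ ∑ q : V, c p q * (f p - f q) ^ 2 :=
    fun p => Finset.sum_nonneg fun q _ => hterm p q
  have hsum : 0 ≤ ∑ p : V, ∑ q : V, c p q * (f p - f q) ^ 2 :=
    Finset.sum_nonneg fun p _ => hrow p
  refine lt_of_le_of_ne (by rw [energy]; positivity) fun h0 => hab ?_
  have hzero : ∑ p : V, ∑ q : V, c p q * (f p - f q) ^ 2 = 0 := by
    rw [energy] at h0
    linarith
  rw [Finset.sum_eq_zero_iff_of_nonneg fun p _ => hrow p] at hzero
  have hedge : ∀ p q, 0 < c p q → f p = f q := by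
    intro p q hpq
    have h := (Finset.sum_eq_zero_iff_of_nonneg fun q _ => hterm p q).mp
      (hzero p (Finset.mem_univ p)) q (Finset.mem_univ q)
    rcases mul_eq_zero.mp h with h | h
    · exact absurd h hpq.ne'
    · exact sub_eq_zero.mp (pow_eq_zero_iff two_ne_zero |>.mp h)
  clear hab
  induction hconn a b with
  | refl => rfl
  | tail _ hbc ih => exact ih.trans (hedge _ _ hbc)

lemma energy_nonneg [Fintype V] {c : V → V → ℝ} (hnonneg : ∀ p q, 0 ≤ c p q) (f : V → ℝ) :
    0 ≤ energy c f :=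
  mul_nonneg (by norm_num) (Finset.sum_nonneg fun p _ => Finset.sum_nonneg fun q _ =>
    mul_nonneg (hnonneg p q) (sq_nonneg _))

/-- Dirichlet's principle: the harmonic potential attains the infimum defining `R(A,B)`. -/
lemma effRes_eq_inv_energy [Fintype V] {c : V → V → ℝ}
    (hsymm : ∀ p q, c p q = c q p) (hnonneg : ∀ p q, 0 ≤ c p q) {A B : Set V}
    {φ : V → ℝ} (hφA : ∀ p ∈ A, φ p = 0) (hφB : ∀ p ∈ B, φ p = 1)
    (hharm : ∀ p, p ∉ A ∪ B → lap c φ p = 0) :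
    effRes c A B = (energy c φ)⁻¹ := by
  have hleast : IsLeast {e : ℝ | ∃ f : V → ℝ, (∀ p ∈ A, f p = 0) ∧ (∀ p ∈ B, f p = 1) ∧
      e = energy c f} (energy c φ) := by
    refine ⟨⟨φ, hφA, hφB, rfl⟩, ?_⟩
    rintro _ ⟨f, hfA, hfB, rfl⟩
    have hflow := isFlow_smul_grad hsymm hnonneg hharm 1
    -- `∇φ` pairs equally with `f` and `φ`, so `E(f) = E(φ) + E(f - φ)`.
    have horth := (half_sum_mul_sub_eq_flux hflow hfA hfB).trans
      (half_sum_mul_sub_eq_flux hflow hφA hφB).symm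
    have hexp : energy c (fun p => f p - φ p) = energy c f + energy c φ -
        2 * ((1 / 2) * ∑ p : V, ∑ q : V, (1 * grad c φ p q) * (f p - f q)) := by
      simp only [energy, grad, Finset.mul_sum, ← Finset.sum_add_distrib,
        ← Finset.sum_sub_distrib]
      exact Finset.sum_congr rfl fun p _ => Finset.sum_congr rfl fun q _ => by ring
    have hself : (1 / 2) * ∑ p : V, ∑ q : V, (1 * grad c φ p q) * (φ p - φ q) =
        energy c φ := by
      simp only [energy, grad]
      congr 1
      exact Finset.sum_congr rfl fun p _ => Finset.sum_congr rfl fun q _ => by ring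
    have h0 := energy_nonneg hnonneg (fun p => f p - φ p)
    rw [hexp, horth, hself] at h0
    linarith
  rw [effRes, hleast.csInf_eq]

lemma dissip_sub_self [Fintype V] (c J K : V → V → ℝ) :
    dissip c (fun p q => J p q - K p q) (fun p q => J p q - K p q) =
      dissip c J J + dissip c K K - 2 * dissip c J K := by
  simp only [dissip, Finset.mul_sum, ← Finset.sum_add_distrib, ← Finset.sum_sub_distrib]
  refine Finset.sum_congr rfl fun p _ => Finset.sum_congr rfl fun q _ => ?_
  split_ifs <;> ring

lemma dissip_term_nonneg (c K : V → V → ℝ) (p q : V) :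
    0 ≤ if 0 < c p q then K p q * K p q / c p q else 0 := by
  split_ifs with h
  · exact div_nonneg (mul_self_nonneg _) h.le
  · exact le_rfl

lemma dissip_self_nonneg [Fintype V] (c K : V → V → ℝ) : 0 ≤ dissip c K K :=
  mul_nonneg (by norm_num) (Finset.sum_nonneg fun p _ => Finset.sum_nonneg fun q _ =>
    dissip_term_nonneg c K p q)

lemma eq_zero_of_dissip_self_eq_zero [Fintype V] {c K : V → V → ℝ} (h : dissip c K K = 0)
    {p q : V} (hpq : 0 < c p q) : K p q = 0 := by
  have hrow : ∀ p, 0 ≤ ∑ q : V, if 0 < c p q then K p q * K p q / c p q else 0 :=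
    fun p => Finset.sum_nonneg fun q _ => dissip_term_nonneg c K p q
  rw [dissip, mul_eq_zero_iff_left (by norm_num),
    Finset.sum_eq_zero_iff_of_nonneg fun p _ => hrow p] at h
  have h := (Finset.sum_eq_zero_iff_of_nonneg fun q _ => dissip_term_nonneg c K p q).mp
    (h p (Finset.mem_univ p)) q (Finset.mem_univ q)
  rw [if_pos hpq, div_eq_zero_iff, or_iff_left hpq.ne'] at h
  exact mul_self_eq_zero.mp h

/-- **Thompson's principle.**  In a finite connected weighted graph, if `φ` is
the harmonic potential with `φ ≡ 0` on `A`, `φ ≡ 1` on `B`, then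
`I = R(A,B) ∇φ` is a unit flow from `A` to `B` with `E(I) = R(A,B)`, and `I` is
the unique minimizer of the energy dissipation among unit flows from `A` to `B`. -/
theorem thompson_principle [Fintype V] (c : V → V → ℝ)
    (hsymm : ∀ p q, c p q = c q p) (hnonneg : ∀ p q, 0 ≤ c p q)
    (hdiag : ∀ p, c p p = 0) (hconn : IsConnected c)
    (A B : Set V) (hA : A.Nonempty) (hB : B.Nonempty) (hAB : Disjoint A B)
    (φ : V → ℝ) (hφA : ∀ p ∈ A, φ p = 0) (hφB : ∀ p ∈ B, φ p = 1)
    (hharm : ∀ p, p ∉ A ∪ B → lap c φ p = 0)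
    (I : V → V → ℝ) (hI : I = fun p q => effRes c A B * grad c φ p q) :
    IsUnitFlow c A B I ∧ dissip c I I = effRes c A B ∧
      ∀ J, IsUnitFlow c A B J →
        dissip c I I ≤ dissip c J J ∧ (dissip c J J = dissip c I I → J = I) := by
  obtain ⟨a, ha⟩ := hA
  obtain ⟨b, hb⟩ := hB
  have hEpos : 0 < energy c φ :=
    energy_pos hnonneg hconn (a := a) (b := b) (by rw [hφA a ha, hφB b hb]; norm_num)
  have hR := effRes_eq_inv_energy hsymm hnonneg hφA hφB hharm
  have hIflow : IsFlow c A B I := by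
    rw [hI]
    exact isFlow_smul_grad hsymm hnonneg hharm _
  have hIflux : flux A I = 1 := by
    rw [← half_sum_mul_sub_eq_flux hIflow hφA hφB, hI]
    have h : (1 / 2) * ∑ p : V, ∑ q : V, (effRes c A B * grad c φ p q) * (φ p - φ q) =
        effRes c A B * energy c φ := by
      simp only [energy, grad, Finset.mul_sum]
      exact Finset.sum_congr rfl fun p _ => Finset.sum_congr rfl fun q _ => by ring
    rw [h, hR, inv_mul_cancel₀ hEpos.ne']
  -- `I` is a multiple of `∇φ`, so pairing with `I` only sees the flux.
  have hpair : ∀ J, IsUnitFlow c A B J → dissip c J I = effRes c A B := by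
    intro J hJ
    rw [hI, dissip_smul_grad hJ.1.2.1, half_sum_mul_sub_eq_flux hJ.1 hφA hφB, hJ.2, mul_one]
  have hII := hpair I ⟨hIflow, hIflux⟩
  refine ⟨⟨hIflow, hIflux⟩, hII, fun J hJ => ?_⟩
  have hpyth := dissip_sub_self c J I
  rw [hpair J hJ] at hpyth
  refine ⟨?_, fun heq => ?_⟩
  · have := dissip_self_nonneg c (fun p q => J p q - I p q)
    linarith
  · funext p q
    by_cases hpq : 0 < c p q
    · exact sub_eq_zero.mp
        (eq_zero_of_dissip_self_eq_zero (K := fun p q => J p q - I p q) (by linarith) hpq)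
    · rw [hJ.1.2.1 p q hpq, hIflow.2.1 p q hpq]

end WeightedGraph
end
end
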